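/- arXiv:2004.09333 — 4 statements merged into one kernel-verified Lean document; each statement's English description precedes it below -/
import Mathlib

section
/- Let (E, 𝓕, μ) be a probability space, (𝒳_i)_{i≥0} measurable spaces, X_i : E → 𝒳_i measurable, 𝒴_n = ∏_{j≥n} 𝒳_j and X̄_n(x) = (X_n(x), X_{n+1}(x), ...). Let (δ_n) be nonnegative reals with δ_n → 0. Let p, q ∈ (1,∞) with 1/p + 1/q = 1, let g_j : 𝒴_j → ℝ^d be measurable with g_j∘X̄_j ∈ L^q(μ; ℝ^d) for all j, and S_n = Σ_{j=0}^{n-1} g_j∘X̄_j. Let r : E → [0,∞) be measurable with ∫ r dμ = 1, and suppose that for every ε > 0 there exist a nonnegative s ∈ L^p(μ) with ∫ s dμ = 1, ‖r − s‖_{L^p(μ)} < ε, and a constant K_s ≥ 0 such that s satisfies the decorrelation property with constant K_s relative to (δ_n). Let ν be the probability measure dν = r dμ and (b_n) positive reals with b_n → ∞. Then the laws of S_n/b_n under μ converge weakly to some probability measure on ℝ^d if and only if the laws of S_n/b_n under ν converge weakly, and in that case the limits coincide. -/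
open MeasureTheory Filter Topology Complex
open scoped BigOperators ENNReal RealInnerProductSpace

/-- `X̄ₙ(x) = (Xₙ(x), Xₙ₊₁(x), ...)`. -/
def Xbar {E : Type*} {𝒳 : ℕ → Type*} (X : ∀ i, E → 𝒳 i) (n : ℕ) (x : E) :
    ∀ j, 𝒳 (n + j) := fun j => X (n + j) x

/-- The decorrelation property with constant `K` relative to the rates `δ`: for every `n`
and every bounded measurable `f : 𝒴ₙ → ℂ`,
`|∫ s·(f∘X̄ₙ) dμ − ∫ s dμ · ∫ f∘X̄ₙ dμ| ≤ K · sup|f| · δₙ`. -/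
def Decorrelates {E : Type*} [MeasurableSpace E] (μ : Measure E) {𝒳 : ℕ → Type*}
    [∀ i, MeasurableSpace (𝒳 i)] (X : ∀ i, E → 𝒳 i) (s : E → ℝ) (K : ℝ) (δ : ℕ → ℝ) : Prop :=
  ∀ (n : ℕ) (f : (∀ j, 𝒳 (n + j)) → ℂ) (C : ℝ), Measurable f → (∀ y, ‖f y‖ ≤ C) →
    ‖(∫ x, (s x : ℂ) * f (Xbar X n x) ∂μ) -
        ((∫ x, s x ∂μ : ℝ) : ℂ) * ∫ x, f (Xbar X n x) ∂μ‖ ≤ K * C * δ n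

/-- Convergence in distribution (weak convergence of laws) of `Wₙ` under `μ` towards `P`. -/
def TendstoInDistribution {E G : Type*} [MeasurableSpace E] [TopologicalSpace G] [MeasurableSpace G]
    (μ : Measure E) (W : ℕ → E → G) (P : Measure G) : Prop :=
  ∀ h : BoundedContinuousFunction G ℝ,
    Tendsto (fun n => ∫ x, h (W n x) ∂μ) atTop (𝓝 (∫ y, h y ∂P))

lemma aux_transfer {E G : Type*} [MeasurableSpace E] [MetricSpace G] [MeasurableSpace G]
    [BorelSpace G] (μ ν : Measure E) [IsProbabilityMeasure μ] [IsProbabilityMeasure ν]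
    (W : ℕ → E → G) (hW : ∀ n, Measurable (W n))
    (hdiff : ∀ h : G → ℝ, (∃ C : ℝ, ∀ x, |h x| ≤ C) → (∃ L, LipschitzWith L h) →
      Tendsto (fun n => ∫ x, h (W n x) ∂ν - ∫ x, h (W n x) ∂μ) atTop (𝓝 0))
    (P : Measure G) (hP : IsProbabilityMeasure P)
    (hT : _root_.TendstoInDistribution μ W P) : _root_.TendstoInDistribution ν W P := by
  have hpr : ∀ n, IsProbabilityMeasure (ν.map (W n)) := fun n =>
    Measure.isProbabilityMeasure_map (hW n).aemeasurable
  let νs : ℕ → ProbabilityMeasure G := fun n => ⟨ν.map (W n), hpr n⟩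
  let P' : ProbabilityMeasure G := ⟨P, hP⟩
  have key : Tendsto νs atTop (𝓝 P') := by
    rw [tendsto_iff_forall_lipschitz_integral_tendsto]
    rintro f ⟨C, hC⟩ ⟨L, hL⟩
    have hne : Nonempty G := by
      by_contra hcon
      rw [not_nonempty_iff] at hcon
      have h1 : P Set.univ = 1 := measure_univ
      rw [Set.univ_eq_empty_iff.mpr hcon] at h1
      simp at h1
    obtain ⟨x0⟩ := hne
    let f' : BoundedContinuousFunction G ℝ := ⟨⟨f, hL.continuous⟩, ⟨C, hC⟩⟩
    have h1 := hT f'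
    have h2 := hdiff f ⟨|f x0| + C, fun x => by
      have := hC x x0
      rw [Real.dist_eq] at this
      have h3 := abs_add_le (f x - f x0) (f x0)
      simp only [sub_add_cancel] at h3
      linarith⟩ ⟨L, hL⟩
    have h3 := h2.add h1
    have h4 : ∀ n, ∫ y, f y ∂(ν.map (W n)) = ∫ x, f (W n x) ∂ν := fun n =>
      integral_map (hW n).aemeasurable hL.continuous.measurable.aestronglyMeasurable
    simp only [νs, P', ProbabilityMeasure.coe_mk, h4]
    simpa [f'] using h3
  rw [ProbabilityMeasure.tendsto_iff_forall_integral_tendsto] at key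
  intro h
  have h1 := key h
  have h4 : ∀ n, ∫ y, h y ∂(ν.map (W n)) = ∫ x, h (W n x) ∂ν := fun n =>
    integral_map (hW n).aemeasurable h.continuous.measurable.aestronglyMeasurable
  simpa only [νs, P', ProbabilityMeasure.coe_mk, h4] using h1

lemma aux_cast_measurable {𝒳 : ℕ → Type*} [∀ i, MeasurableSpace (𝒳 i)] {a c : ℕ} (h : a = c) :
    Measurable (fun y : 𝒳 a => (h ▸ y : 𝒳 c)) := by
  subst h; exact measurable_id

def auxShift {𝒳 : ℕ → Type*} (m k : ℕ) (y : ∀ j, 𝒳 (m + j)) : ∀ j, 𝒳 (m + k + j) :=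
  fun j => (Nat.add_assoc m k j).symm ▸ y (k + j)

lemma auxShift_measurable {𝒳 : ℕ → Type*} [∀ i, MeasurableSpace (𝒳 i)] (m k : ℕ) :
    Measurable (auxShift (𝒳 := 𝒳) m k) := by
  refine measurable_pi_lambda _ fun j => ?_
  exact (aux_cast_measurable (𝒳 := 𝒳) (Nat.add_assoc m k j).symm).comp (measurable_pi_apply (k + j))

lemma aux_cast_X {E : Type*} {𝒳 : ℕ → Type*} (X : ∀ i, E → 𝒳 i) (x : E) {a c : ℕ} (h : a = c) :
    (h ▸ X a x : 𝒳 c) = X c x := by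
  subst h; rfl

lemma auxShift_Xbar {E : Type*} {𝒳 : ℕ → Type*} (X : ∀ i, E → 𝒳 i) (m k : ℕ) (x : E) :
    auxShift m k (Xbar X m x) = Xbar X (m + k) x := by
  funext j
  exact aux_cast_X X x _

lemma Xbar_measurable' {E : Type*} [MeasurableSpace E] {𝒳 : ℕ → Type*}
    [∀ i, MeasurableSpace (𝒳 i)] (X : ∀ i, E → 𝒳 i) (hX : ∀ i, Measurable (X i)) (m : ℕ) :
    Measurable (Xbar X m) :=
  measurable_pi_lambda _ fun j => hX (m + j)

/-- Bound on the decorrelated part. -/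
lemma aux_B {E : Type*} [MeasurableSpace E] (μ : Measure E) [IsProbabilityMeasure μ]
    {𝒳 : ℕ → Type*} [∀ i, MeasurableSpace (𝒳 i)]
    (X : ∀ i, E → 𝒳 i) (hX : ∀ i, Measurable (X i)) (δ : ℕ → ℝ)
    (r s : E → ℝ) (hr : Integrable r μ) (hs : Integrable s μ) (hs1 : ∫ x, s x ∂μ = 1)
    (K : ℝ) (hdec : Decorrelates μ X s K δ) (m : ℕ)
    (F : (∀ j, 𝒳 (m + j)) → ℝ) (hF : Measurable F) (C : ℝ) (hC : ∀ y, |F y| ≤ C) :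
    |∫ x, (r x - 1) * F (Xbar X m x) ∂μ| ≤ C * (∫ x, |r x - s x| ∂μ) + K * C * δ m := by
  have hFX : AEStronglyMeasurable (fun x => F (Xbar X m x)) μ :=
    (hF.comp (Xbar_measurable' X hX m)).aestronglyMeasurable
  have hb : ∀ᵐ x ∂μ, ‖F (Xbar X m x)‖ ≤ C := Eventually.of_forall fun x => hC _
  have i1 : Integrable (fun x => (r x - s x) * F (Xbar X m x)) μ :=
    (hr.sub hs).mul_bdd hFX hb
  have i2 : Integrable (fun x => s x * F (Xbar X m x)) μ := hs.mul_bdd hFX hb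
  have i3 : Integrable (fun x => F (Xbar X m x)) μ :=
    (integrable_const C).mono' hFX hb
  have e : ∫ x, (r x - 1) * F (Xbar X m x) ∂μ = ∫ x, (r x - s x) * F (Xbar X m x) ∂μ +
      (∫ x, s x * F (Xbar X m x) ∂μ - ∫ x, F (Xbar X m x) ∂μ) := by
    have i4 : Integrable (fun x => s x * F (Xbar X m x) - F (Xbar X m x)) μ := i2.sub i3
    rw [← integral_sub i2 i3, ← integral_add i1 i4]
    congr 1; funext x; ring
  have d := hdec m (fun y => (F y : ℂ)) C (Complex.measurable_ofReal.comp hF)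
    (fun y => by simpa using hC y)
  have d2 : |∫ x, s x * F (Xbar X m x) ∂μ - ∫ x, F (Xbar X m x) ∂μ| ≤ K * C * δ m := by
    rw [hs1] at d
    have e1 : ∫ x, (s x : ℂ) * (F (Xbar X m x) : ℂ) ∂μ
        = ((∫ x, s x * F (Xbar X m x) ∂μ : ℝ) : ℂ) := by
      rw [← integral_complex_ofReal]; congr 1; funext x; push_cast; rfl
    have e2 : ∫ x, (F (Xbar X m x) : ℂ) ∂μ = ((∫ x, F (Xbar X m x) ∂μ : ℝ) : ℂ) :=
      integral_complex_ofReal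
    rw [e1, e2, Complex.ofReal_one, one_mul, ← Complex.ofReal_sub, Complex.norm_real] at d
    exact d
  have d1 : |∫ x, (r x - s x) * F (Xbar X m x) ∂μ| ≤ C * ∫ x, |r x - s x| ∂μ := by
    rw [← integral_const_mul]
    refine (abs_integral_le_integral_abs).trans ?_
    refine integral_mono i1.abs ((hr.sub hs).abs.const_mul C) fun x => ?_
    simp only [abs_mul]
    rw [mul_comm]
    exact mul_le_mul_of_nonneg_right (hC _) (abs_nonneg _)
  rw [e]
  exact (abs_add_le _ _).trans (add_le_add d1 d2)

lemma aux_key {E : Type*} [MeasurableSpace E] (μ : Measure E) [IsProbabilityMeasure μ]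
    {𝒳 : ℕ → Type*} [∀ i, MeasurableSpace (𝒳 i)]
    (X : ∀ i, E → 𝒳 i) (hX : ∀ i, Measurable (X i))
    (δ : ℕ → ℝ) (hδ : Tendsto δ atTop (𝓝 0))
    {d : ℕ} (g : ∀ j, (∀ i, 𝒳 (j + i)) → EuclideanSpace ℝ (Fin d))
    (hg : ∀ j, Measurable (g j))
    (S : ℕ → E → EuclideanSpace ℝ (Fin d))
    (hS : ∀ n x, S n x = ∑ j ∈ Finset.range n, g j (Xbar X j x))
    (r : E → ℝ) (hr : Integrable r μ)
    (happrox : ∀ ε : ℝ, 0 < ε → ∃ s : E → ℝ, Integrable s μ ∧ (∫ x, s x ∂μ) = 1 ∧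
      (∫ x, |r x - s x| ∂μ) < ε ∧ ∃ Ks : ℝ, Decorrelates μ X s Ks δ)
    (b : ℕ → ℝ) (hb : Tendsto b atTop atTop) (hSm : ∀ n, Measurable (S n))
    (h : EuclideanSpace ℝ (Fin d) → ℝ) (hbd : ∃ C : ℝ, ∀ x, |h x| ≤ C)
    (hlip : ∃ L, LipschitzWith L h) :
    Tendsto (fun n => ∫ x, (r x - 1) * h ((b n)⁻¹ • S n x) ∂μ) atTop (𝓝 0) := by
  obtain ⟨L, hL⟩ := hlip
  have hhm : Measurable h := hL.continuous.measurable
  obtain ⟨C, hC0, hC⟩ : ∃ C : ℝ, 0 < C ∧ ∀ x, |h x| ≤ C := by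
    obtain ⟨C, hC⟩ := hbd
    exact ⟨|C| + 1, by positivity, fun x => by linarith [hC x, le_abs_self C]⟩
  rw [Metric.tendsto_nhds]
  intro η hη
  obtain ⟨s, hs, hs1, hrs, K, hdec⟩ := happrox (η / (4 * C)) (by positivity)
  have hlim : Tendsto (fun m => K * C * δ m) atTop (𝓝 0) := by simpa using hδ.const_mul (K * C)
  obtain ⟨m, hm⟩ := (hlim.eventually_lt_const (show (0 : ℝ) < η / 4 by positivity)).exists
  let f : ℕ → (∀ j, 𝒳 (m + j)) → EuclideanSpace ℝ (Fin d) := fun n y =>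
    (b n)⁻¹ • ∑ k ∈ Finset.range (n - m), g (m + k) (auxShift m k y)
  have hf : ∀ n, Measurable (f n) := fun n =>
    Measurable.const_smul (g := fun y => ∑ k ∈ Finset.range (n - m), g (m + k) (auxShift m k y))
      (Finset.measurable_sum _ fun k _ => (hg (m + k)).comp (auxShift_measurable m k)) (b n)⁻¹
  have hW : ∀ n, m ≤ n → ∀ x, (b n)⁻¹ • S n x = (b n)⁻¹ • S m x + f n (Xbar X m x) := by
    intro n hn x
    obtain ⟨k, rfl⟩ := Nat.exists_eq_add_of_le hn
    simp only [f, auxShift_Xbar, hS, Nat.add_sub_cancel_left]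
    rw [Finset.sum_range_add, smul_add]
  have hBn : ∀ n, |∫ x, (r x - 1) * h (f n (Xbar X m x)) ∂μ| < η / 2 := by
    intro n
    have h1 := aux_B μ X hX δ r s hr hs hs1 K hdec m (fun y => h (f n y)) (hhm.comp (hf n)) C
      (fun y => hC _)
    have h2 : C * (∫ x, |r x - s x| ∂μ) < C * (η / (4 * C)) := mul_lt_mul_of_pos_left hrs hC0
    have h3 : C * (η / (4 * C)) = η / 4 := by field_simp
    linarith
  have hr1 : Integrable (fun x => r x - 1) μ := hr.sub (integrable_const 1)
  have mW : ∀ n, Measurable (fun x => h ((b n)⁻¹ • S n x)) := fun n =>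
    hhm.comp ((hSm n).const_smul (b n)⁻¹)
  have mF : ∀ n, Measurable (fun x => h (f n (Xbar X m x))) := fun n =>
    hhm.comp ((hf n).comp (Xbar_measurable' X hX m))
  have hA : Tendsto (fun n => ∫ x, (r x - 1) *
      (h ((b n)⁻¹ • S n x) - h (f n (Xbar X m x))) ∂μ) atTop (𝓝 (∫ x, (0 : ℝ) ∂μ)) := by
    refine tendsto_integral_of_dominated_convergence (fun x => |r x - 1| * (2 * C)) ?_ ?_ ?_ ?_
    · intro n
      exact hr1.aestronglyMeasurable.mul ((mW n).sub (mF n)).aestronglyMeasurable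
    · exact hr1.abs.mul_const _
    · intro n
      refine Eventually.of_forall fun x => ?_
      rw [norm_mul]
      refine mul_le_mul_of_nonneg_left ?_ (norm_nonneg _)
      refine (norm_sub_le _ _).trans ?_
      simp only [Real.norm_eq_abs]
      linarith [hC ((b n)⁻¹ • S n x), hC (f n (Xbar X m x))]
    · refine Eventually.of_forall fun x => ?_
      have hz : Tendsto (fun n => h ((b n)⁻¹ • S n x) - h (f n (Xbar X m x))) atTop (𝓝 0) := by
        have hz1 : Tendsto (fun n => (L : ℝ) * (‖(b n)⁻¹‖ * ‖S m x‖)) atTop (𝓝 0) := by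
          have := ((tendsto_inv_atTop_zero.comp hb).norm.mul_const ‖S m x‖).const_mul (L : ℝ)
          simpa using this
        refine squeeze_zero_norm' ?_ hz1
        filter_upwards [eventually_ge_atTop m] with n hn
        have := hL.dist_le_mul ((b n)⁻¹ • S n x) (f n (Xbar X m x))
        rw [dist_eq_norm, dist_eq_norm] at this
        refine this.trans_eq ?_
        rw [hW n hn x, add_sub_cancel_right, norm_smul]
      simpa using hz.const_mul (r x - 1)
  rw [integral_zero, Metric.tendsto_nhds] at hA
  filter_upwards [hA (η / 2) (by positivity)] with n hn
  have iW : Integrable (fun x => (r x - 1) * h ((b n)⁻¹ • S n x)) μ :=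
    hr1.mul_bdd (mW n).aestronglyMeasurable (Eventually.of_forall fun x => hC _)
  have iF : Integrable (fun x => (r x - 1) * h (f n (Xbar X m x))) μ :=
    hr1.mul_bdd (mF n).aestronglyMeasurable (Eventually.of_forall fun x => hC _)
  have e : ∫ x, (r x - 1) * (h ((b n)⁻¹ • S n x) - h (f n (Xbar X m x))) ∂μ =
      ∫ x, (r x - 1) * h ((b n)⁻¹ • S n x) ∂μ - ∫ x, (r x - 1) * h (f n (Xbar X m x)) ∂μ := by
    rw [← integral_sub iW iF]; congr 1; funext x; ring
  rw [e, Real.dist_eq, sub_zero, abs_lt] at hn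
  have hB := abs_lt.mp (hBn n)
  rw [Real.dist_eq, sub_zero, abs_lt]
  constructor <;> linarith [hn.1, hn.2, hB.1, hB.2]

/-- **Non-stationary Eagleson theorem** (Theorem 2.2, case where `r` lies in the
`L^p(μ)`-closure of the decorrelating class): with conjugate exponents `p, q ∈ (1,∞)`,
`gⱼ∘X̄ⱼ ∈ L^q(μ)`, and `r` a probability density approximable in `L^p(μ)` by nonnegative
probability densities satisfying the decorrelation property, `Sₙ/bₙ` converges in
distribution under `μ` iff it does under `ν = r dμ`, with the same limit. -/
theorem eagleson_nonstationary_closure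
    {E : Type*} [MeasurableSpace E] (μ : Measure E) [IsProbabilityMeasure μ]
    {𝒳 : ℕ → Type*} [∀ i, MeasurableSpace (𝒳 i)]
    (X : ∀ i, E → 𝒳 i) (hX : ∀ i, Measurable (X i))
    (δ : ℕ → ℝ) (hδ0 : ∀ n, 0 ≤ δ n) (hδ : Tendsto δ atTop (𝓝 0))
    (p q : ℝ≥0∞) (hp : 1 < p) (hp' : p ≠ ∞) (hq : 1 < q) (hq' : q ≠ ∞)
    (hpq : 1 / p + 1 / q = 1)
    {d : ℕ} (g : ∀ j, (∀ i, 𝒳 (j + i)) → EuclideanSpace ℝ (Fin d))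
    (hg : ∀ j, Measurable (g j))
    (hgq : ∀ j, MemLp (fun x => g j (Xbar X j x)) q μ)
    (S : ℕ → E → EuclideanSpace ℝ (Fin d))
    (hS : ∀ n x, S n x = ∑ j ∈ Finset.range n, g j (Xbar X j x))
    (r : E → ℝ) (hrmeas : Measurable r) (hr0 : ∀ x, 0 ≤ r x) (hr1 : ∫ x, r x ∂μ = 1)
    (happrox : ∀ ε : ℝ, 0 < ε → ∃ s : E → ℝ, Measurable s ∧ (∀ x, 0 ≤ s x) ∧
      MemLp s p μ ∧ (∫ x, s x ∂μ) = 1 ∧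
      eLpNorm (fun x => r x - s x) p μ < ENNReal.ofReal ε ∧
      ∃ Ks : ℝ, 0 ≤ Ks ∧ Decorrelates μ X s Ks δ)
    (b : ℕ → ℝ) (hb0 : ∀ n, 0 < b n) (hb : Tendsto b atTop atTop)
    (ν : Measure E) (hν : ν = μ.withDensity (fun x => ENNReal.ofReal (r x))) :
    ((∃ P : Measure (EuclideanSpace ℝ (Fin d)), IsProbabilityMeasure P ∧
        TendstoInDistribution μ (fun n x => (b n)⁻¹ • S n x) P) ↔
      (∃ P : Measure (EuclideanSpace ℝ (Fin d)), IsProbabilityMeasure P ∧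
        TendstoInDistribution ν (fun n x => (b n)⁻¹ • S n x) P)) ∧
    (∀ P Q : Measure (EuclideanSpace ℝ (Fin d)),
      IsProbabilityMeasure P → IsProbabilityMeasure Q →
      TendstoInDistribution μ (fun n x => (b n)⁻¹ • S n x) P →
      TendstoInDistribution ν (fun n x => (b n)⁻¹ • S n x) Q → P = Q) := by
  have hr : Integrable r μ := by
    by_contra hcon
    rw [integral_undef hcon] at hr1
    exact zero_ne_one hr1
  have hνp : IsProbabilityMeasure ν := by
    constructor
    rw [hν, withDensity_apply _ MeasurableSet.univ, Measure.restrict_univ,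
      ← ofReal_integral_eq_lintegral_ofReal hr (Eventually.of_forall hr0), hr1, ENNReal.ofReal_one]
  have hSm : ∀ n, Measurable (S n) := by
    intro n
    have : S n = fun x => ∑ j ∈ Finset.range n, g j (Xbar X j x) := funext (hS n)
    rw [this]
    exact Finset.measurable_sum _ fun j _ => (hg j).comp (Xbar_measurable' X hX j)
  have hWm : ∀ n, Measurable (fun x => (b n)⁻¹ • S n x) := fun n => (hSm n).const_smul (b n)⁻¹
  have happ : ∀ ε : ℝ, 0 < ε → ∃ s : E → ℝ, Integrable s μ ∧ (∫ x, s x ∂μ) = 1 ∧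
      (∫ x, |r x - s x| ∂μ) < ε ∧ ∃ Ks : ℝ, Decorrelates μ X s Ks δ := by
    intro ε hε
    obtain ⟨s, hsm, hs0, hsp, hs1, hrs, K, hK, hdec⟩ := happrox ε hε
    have hsi : Integrable s μ := hsp.integrable hp.le
    refine ⟨s, hsi, hs1, ?_, K, hdec⟩
    have h1 : eLpNorm (fun x => r x - s x) 1 μ < ENNReal.ofReal ε :=
      (eLpNorm_le_eLpNorm_of_exponent_le hp.le
        (hrmeas.sub hsm).aestronglyMeasurable).trans_lt hrs
    have hi : Integrable (fun x => r x - s x) μ := hr.sub hsi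
    rw [eLpNorm_one_eq_lintegral_enorm,
      ← ofReal_integral_norm_eq_lintegral_enorm hi] at h1
    exact (ENNReal.ofReal_lt_ofReal_iff hε).mp h1
  have hdiff : ∀ h : EuclideanSpace ℝ (Fin d) → ℝ, (∃ C : ℝ, ∀ x, |h x| ≤ C) →
      (∃ L, LipschitzWith L h) →
      Tendsto (fun n => ∫ x, h ((b n)⁻¹ • S n x) ∂ν - ∫ x, h ((b n)⁻¹ • S n x) ∂μ)
        atTop (𝓝 0) := by
    intro h hbd hlip
    have key := aux_key μ X hX δ hδ g hg S hS r hr happ b hb hSm h hbd hlip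
    refine key.congr fun n => ?_
    obtain ⟨C, hC⟩ := hbd
    obtain ⟨L, hL⟩ := hlip
    have hm : AEStronglyMeasurable (fun x => h ((b n)⁻¹ • S n x)) μ :=
      (hL.continuous.measurable.comp (hWm n)).aestronglyMeasurable
    have hbb : ∀ᵐ x ∂μ, ‖h ((b n)⁻¹ • S n x)‖ ≤ C := Eventually.of_forall fun x => hC _
    rw [hν, integral_withDensity_eq_integral_toReal_smul hrmeas.ennreal_ofReal
      (Eventually.of_forall fun x => ENNReal.ofReal_lt_top)]
    simp only [ENNReal.toReal_ofReal (hr0 _), smul_eq_mul]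
    rw [← integral_sub (hr.mul_bdd hm hbb) ((integrable_const C).mono' hm hbb)]
    congr 1; funext x; ring
  have hdiff' : ∀ h : EuclideanSpace ℝ (Fin d) → ℝ, (∃ C : ℝ, ∀ x, |h x| ≤ C) →
      (∃ L, LipschitzWith L h) →
      Tendsto (fun n => ∫ x, h ((b n)⁻¹ • S n x) ∂μ - ∫ x, h ((b n)⁻¹ • S n x) ∂ν)
        atTop (𝓝 0) := by
    intro h hbd hlip
    simpa using (hdiff h hbd hlip).neg
  refine ⟨⟨?_, ?_⟩, ?_⟩
  · rintro ⟨P, hP, hT⟩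
    exact ⟨P, hP, aux_transfer μ ν _ hWm hdiff P hP hT⟩
  · rintro ⟨P, hP, hT⟩
    exact ⟨P, hP, aux_transfer ν μ _ hWm hdiff' P hP hT⟩
  · intro P Q hP hQ h1 h2
    have h3 := aux_transfer μ ν _ hWm hdiff P hP h1
    exact ext_of_forall_integral_eq_of_IsFiniteMeasure fun f =>
      tendsto_nhds_unique (h3 f) (h2 f)
end

section
/- Let (E, 𝓕, μ) be a probability space, (𝒳_i)_{i≥0} measurable spaces, X_i : E → 𝒳_i measurable, 𝒴_n = ∏_{j≥n} 𝒳_j and X̄_n(x) = (X_n(x), X_{n+1}(x), ...). Let (δ_n) be nonnegative reals, r : E → [0,∞) with ∫ r dμ = 1 satisfying the decorrelation property with constant K ≥ 0 relative to (δ_n), and ν the probability measure dν = r dμ. Let g_j : 𝒴_j → ℝ^d be measurable, S_n = Σ_{j=0}^{n-1} g_j∘X̄_j, and (b_n) positive reals. Suppose there are p₁ ∈ [1,∞], p₂, p₃ ∈ [1,∞) with 1/p₁ + 1/p₂ + 1/p₃ = 1, with r ∈ L^{p₁}(μ), g_j∘X̄_j ∈ L^{p₂}(μ; ℝ^d) for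 all j, and positive numbers (M_j) such that 𝓜_n := Σ_{j=0}^{n-1} ( M_j δ_j + ‖g_j∘X̄_j‖_{L^{p₂}(μ)}^{1 + p₂/p₃} M_j^{−p₂/p₃} ) satisfies 𝓜_n / b_n → 0. Then | ∫ S_n dν − ∫ S_n dμ | / b_n → 0 as n → ∞, and consequently ( S_n − ∫ S_n dμ ) / b_n converges in distribution under ν if and only if ( S_n − ∫ S_n dν ) / b_n converges in distribution under ν, and in that case the limits coincide. -/
open MeasureTheory Filter Topology Complex
open scoped BigOperators ENNReal RealInnerProductSpace

lemma cp_slutsky {E : Type*} [MeasurableSpace E] {d : ℕ} (ν : Measure E) [IsProbabilityMeasure ν]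
    (W W' : ℕ → E → EuclideanSpace ℝ (Fin d)) (hW : ∀ n, Measurable (W n))
    (hW' : ∀ n, Measurable (W' n)) (c : ℕ → EuclideanSpace ℝ (Fin d))
    (hc : Tendsto c atTop (𝓝 0)) (hWc : ∀ n x, W' n x - W n x = c n)
    (P : Measure (EuclideanSpace ℝ (Fin d))) [IsProbabilityMeasure P]
    (h : _root_.TendstoInDistribution ν W P) : _root_.TendstoInDistribution ν W' P := by
  have h1 : MeasureTheory.TendstoInDistribution W atTop id (fun _ => ν) P := by
    refine ⟨fun n => (hW n).aemeasurable, aemeasurable_id, ?_⟩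
    refine ProbabilityMeasure.tendsto_iff_forall_integral_tendsto.2 ?_
    intro f
    have := h f
    simp only [ProbabilityMeasure.coe_mk, Measure.map_id]
    refine this.congr fun n => ?_
    rw [integral_map (hW n).aemeasurable f.continuous.aestronglyMeasurable]
  have h2 : TendstoInMeasure ν (W' - W) atTop 0 := by
    refine tendstoInMeasure_of_tendsto_ae (fun n => ((hW' n).sub (hW n)).aestronglyMeasurable) ?_
    refine ae_of_all _ fun x => ?_
    simpa [hWc] using hc
  have h3 := tendstoInDistribution_of_tendstoInMeasure_sub W' id h1 h2
    (fun n => (hW' n).aemeasurable)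
  have h4 := ProbabilityMeasure.tendsto_iff_forall_integral_tendsto.1 h3.tendsto
  intro f
  have h5 := h4 f
  simp only [ProbabilityMeasure.coe_mk, Measure.map_id] at h5
  refine h5.congr fun n => ?_
  rw [integral_map (hW' n).aemeasurable f.continuous.aestronglyMeasurable]

lemma cp_tail {E : Type*} [MeasurableSpace E] (μ : Measure E) {F : Type*} [NormedAddCommGroup F]
    [NormedSpace ℝ F]
    (p₁ p₂ p₃ : ℝ≥0∞) (hp₂ : 1 ≤ p₂) (hp₂' : p₂ ≠ ∞)
    (hp₃ : 1 ≤ p₃) (hp₃' : p₃ ≠ ∞)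
    (hsum : 1 / p₁ + 1 / p₂ + 1 / p₃ = 1) (ρ : E → ℝ) (hρ : MemLp ρ p₁ μ)
    (G : E → F) (hG : MemLp G p₂ μ) (M : ℝ) (hM : 0 < M)
    (B : E → F) (hB : ∀ x, B x = 0 ∨ (M ≤ ‖G x‖ ∧ B x = G x)) :
    ‖∫ x, ρ x • B x ∂μ‖ ≤ (eLpNorm ρ p₁ μ).toReal *
      ((eLpNorm G p₂ μ).toReal ^ (1 + p₂.toReal / p₃.toReal) * M ^ (-(p₂.toReal / p₃.toReal))) := by
  set t := p₂.toReal / p₃.toReal with ht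
  have h2pos : 0 < p₂.toReal := ENNReal.toReal_pos (by positivity) hp₂'
  have h3pos : 0 < p₃.toReal := ENNReal.toReal_pos (by positivity) hp₃'
  have htpos : 0 < t := by positivity
  let q : ℝ≥0∞ := (1 / p₂ + 1 / p₃)⁻¹
  have hq : q * ENNReal.ofReal (1 + t) = p₂ := by
    have e2 : p₂ = ENNReal.ofReal p₂.toReal := (ENNReal.ofReal_toReal hp₂').symm
    have e3 : p₃ = ENNReal.ofReal p₃.toReal := (ENNReal.ofReal_toReal hp₃').symm
    have : q = ENNReal.ofReal ((1 / p₂.toReal + 1 / p₃.toReal)⁻¹) := by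
      rw [ENNReal.ofReal_inv_of_pos (by positivity), ENNReal.ofReal_add (by positivity)
        (by positivity), one_div, one_div, ENNReal.ofReal_inv_of_pos h2pos,
        ENNReal.ofReal_inv_of_pos h3pos, ← e2, ← e3]
      simp [q]
    rw [this, ← ENNReal.ofReal_mul (by positivity)]
    conv_rhs => rw [e2]
    congr 1
    rw [ht]
    field_simp
  have : ENNReal.HolderTriple p₁ q 1 := ⟨by
    simp only [q, inv_inv, inv_one]
    rw [← add_assoc, ← one_div p₁]; exact hsum⟩
  have hH : eLpNorm (fun x => ‖G x‖ ^ (1 + t)) q μ = eLpNorm G p₂ μ ^ (1 + t) := by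
    rw [eLpNorm_norm_rpow G (by positivity), hq]
  have hHm : AEStronglyMeasurable (fun x => ‖G x‖ ^ (1 + t)) μ :=
    (hG.1.norm.aemeasurable.pow_const _).aestronglyMeasurable
  have hHL : MemLp (fun x => ‖G x‖ ^ (1 + t)) q μ :=
    ⟨hHm, by rw [hH]; exact ENNReal.rpow_lt_top_of_nonneg (by positivity) hG.2.ne⟩
  have hle := eLpNorm_smul_le_mul_eLpNorm (r := 1) hHm hρ.1 (p := p₁) (q := q)
  have hInt : Integrable (ρ • fun x => ‖G x‖ ^ (1 + t)) μ :=
    memLp_one_iff_integrable.1 (hHL.smul hρ)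
  have hI : ∫ x, ‖(ρ • fun x => ‖G x‖ ^ (1 + t)) x‖ ∂μ ≤
      (eLpNorm ρ p₁ μ).toReal * (eLpNorm G p₂ μ).toReal ^ (1 + t) := by
    rw [integral_norm_eq_lintegral_enorm hInt.1, ← eLpNorm_one_eq_lintegral_enorm,
      ENNReal.toReal_rpow, ← ENNReal.toReal_mul, ← hH]
    exact ENNReal.toReal_mono (ENNReal.mul_ne_top hρ.2.ne hHL.2.ne) hle
  calc ‖∫ x, ρ x • B x ∂μ‖
      ≤ ∫ x, ‖(ρ • fun x => ‖G x‖ ^ (1 + t)) x‖ * M ^ (-t) ∂μ := by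
        refine norm_integral_le_of_norm_le (hInt.norm.mul_const _) (ae_of_all _ fun x => ?_)
        rcases hB x with h | ⟨h, h'⟩
        · rw [h]; simp; positivity
        · rw [h', norm_smul]
          simp only [Pi.smul_apply', smul_eq_mul, norm_mul]
          rw [mul_assoc]
          gcongr
          have hGp : 0 < ‖G x‖ := hM.trans_le h
          rw [Real.norm_of_nonneg (by positivity), Real.rpow_add hGp, Real.rpow_one,
            Real.rpow_neg hM.le, mul_assoc]
          have : 1 ≤ ‖G x‖ ^ t * (M ^ t)⁻¹ := by
            rw [← div_eq_mul_inv, one_le_div (by positivity)]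
            gcongr
          nlinarith
    _ = (∫ x, ‖(ρ • fun x => ‖G x‖ ^ (1 + t)) x‖ ∂μ) * M ^ (-t) := integral_mul_const _ _
    _ ≤ _ := by
        rw [← mul_assoc]
        gcongr

lemma cp_bdd {E : Type*} [MeasurableSpace E] (μ : Measure E) [IsProbabilityMeasure μ]
    {𝒳 : ℕ → Type*} [∀ i, MeasurableSpace (𝒳 i)]
    (X : ∀ i, E → 𝒳 i) (hX : ∀ i, Measurable (X i)) (δ : ℕ → ℝ) (hδ0 : ∀ n, 0 ≤ δ n)
    (r : E → ℝ) (hr : Integrable r μ) (hr1 : ∫ x, r x ∂μ = 1)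
    (K : ℝ) (hK : 0 ≤ K) (hdec : Decorrelates μ X r K δ) {d : ℕ} (j : ℕ)
    (A : (∀ i, 𝒳 (j + i)) → EuclideanSpace ℝ (Fin d)) (hA : Measurable A) (M : ℝ) (hM : 0 < M)
    (hAM : ∀ y, ‖A y‖ ≤ M) :
    ‖∫ x, (r x - 1) • A (Xbar X j x) ∂μ‖ ≤ K * M * δ j := by
  set w := ∫ x, (r x - 1) • A (Xbar X j x) ∂μ with hw
  have hXb : Measurable (Xbar X j) := measurable_pi_lambda _ fun i => hX _
  have hAX : Measurable (fun x => A (Xbar X j x)) := hA.comp hXb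
  have hiA : Integrable (fun x => A (Xbar X j x)) μ :=
    Integrable.of_bound hAX.aestronglyMeasurable M (ae_of_all _ fun x => hAM _)
  have hirA : Integrable (fun x => r x • A (Xbar X j x)) μ :=
    hr.smul_bdd M hAX.aestronglyMeasurable (ae_of_all _ fun x => hAM _)
  have hd := hdec j (fun y => ((inner ℝ w (A y) : ℝ) : ℂ)) (‖w‖ * M)
    (measurable_ofReal.comp (measurable_const.inner hA)) (fun y => by
      rw [Complex.norm_real]
      exact (norm_inner_le_norm _ _).trans (by gcongr; exact hAM y))
  have e : (∫ x, (r x : ℂ) * ((inner ℝ w (A (Xbar X j x)) : ℝ) : ℂ) ∂μ) -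
        ((∫ x, r x ∂μ : ℝ) : ℂ) * ∫ x, ((inner ℝ w (A (Xbar X j x)) : ℝ) : ℂ) ∂μ
      = ((‖w‖ ^ 2 : ℝ) : ℂ) := by
    rw [hr1]
    simp_rw [← Complex.ofReal_mul]
    rw [integral_complex_ofReal, integral_complex_ofReal]
    simp only [Complex.ofReal_one, one_mul]
    rw [← Complex.ofReal_sub]
    congr 1
    simp_rw [← real_inner_smul_right]
    rw [integral_inner hirA, integral_inner hiA, ← inner_sub_right, ← integral_sub hirA hiA,
      ← real_inner_self_eq_norm_sq]
    congr 1
    rw [hw]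
    congr 1
    ext1 x
    rw [sub_smul, one_smul]
  rw [e, Complex.norm_real, Real.norm_of_nonneg (by positivity)] at hd
  by_cases h0 : ‖w‖ = 0
  · rw [h0]; have := hδ0 j; positivity
  · have hpos : 0 < ‖w‖ := lt_of_le_of_ne (norm_nonneg _) (Ne.symm h0)
    refine le_of_mul_le_mul_left ?_ hpos
    nlinarith

/-- **Proposition 2.4 (the centering problem)**: if `r ∈ L^{p₁}(μ)` decorrelates,
`gⱼ∘X̄ⱼ ∈ L^{p₂}(μ)`, `1/p₁ + 1/p₂ + 1/p₃ = 1`, and for some positive truncation levels `Mⱼ`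
the quantity `𝓜ₙ = ∑_{j<n} (Mⱼδⱼ + ‖gⱼ∘X̄ⱼ‖_{p₂}^{1+p₂/p₃} Mⱼ^{−p₂/p₃})` is `o(bₙ)`, then
`|∫ Sₙ dν − ∫ Sₙ dμ| = o(bₙ)`, and consequently `(Sₙ − ∫Sₙ dμ)/bₙ` converges in distribution
under `ν` iff `(Sₙ − ∫Sₙ dν)/bₙ` does, with the same limit. -/
theorem centering_problem
    {E : Type*} [MeasurableSpace E] (μ : Measure E) [IsProbabilityMeasure μ]
    {𝒳 : ℕ → Type*} [∀ i, MeasurableSpace (𝒳 i)]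
    (X : ∀ i, E → 𝒳 i) (hX : ∀ i, Measurable (X i))
    (δ : ℕ → ℝ) (hδ0 : ∀ n, 0 ≤ δ n)
    (r : E → ℝ) (hrmeas : Measurable r) (hr0 : ∀ x, 0 ≤ r x) (hr1 : ∫ x, r x ∂μ = 1)
    (K : ℝ) (hK : 0 ≤ K) (hdec : Decorrelates μ X r K δ)
    (ν : Measure E) (hν : ν = μ.withDensity (fun x => ENNReal.ofReal (r x)))
    {d : ℕ} (g : ∀ j, (∀ i, 𝒳 (j + i)) → EuclideanSpace ℝ (Fin d))
    (hg : ∀ j, Measurable (g j))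
    (S : ℕ → E → EuclideanSpace ℝ (Fin d))
    (hS : ∀ n x, S n x = ∑ j ∈ Finset.range n, g j (Xbar X j x))
    (b : ℕ → ℝ) (hb0 : ∀ n, 0 < b n)
    (p₁ p₂ p₃ : ℝ≥0∞) (hp₁ : 1 ≤ p₁) (hp₂ : 1 ≤ p₂) (hp₂' : p₂ ≠ ∞)
    (hp₃ : 1 ≤ p₃) (hp₃' : p₃ ≠ ∞)
    (hsum : 1 / p₁ + 1 / p₂ + 1 / p₃ = 1)
    (hrL : MemLp r p₁ μ)
    (hgL : ∀ j, MemLp (fun x => g j (Xbar X j x)) p₂ μ)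
    (M : ℕ → ℝ) (hM : ∀ j, 0 < M j)
    (h𝓜 : Tendsto (fun n =>
      (∑ j ∈ Finset.range n, (M j * δ j +
        (eLpNorm (fun x => g j (Xbar X j x)) p₂ μ).toReal ^ (1 + p₂.toReal / p₃.toReal) *
          M j ^ (-(p₂.toReal / p₃.toReal)))) / b n) atTop (𝓝 0)) :
    Tendsto (fun n => ‖(∫ x, S n x ∂ν) - ∫ x, S n x ∂μ‖ / b n) atTop (𝓝 0) ∧
    ((∃ P : Measure (EuclideanSpace ℝ (Fin d)), IsProbabilityMeasure P ∧
        TendstoInDistribution ν (fun n x => (b n)⁻¹ • (S n x - ∫ y, S n y ∂μ)) P) ↔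
      (∃ P : Measure (EuclideanSpace ℝ (Fin d)), IsProbabilityMeasure P ∧
        TendstoInDistribution ν (fun n x => (b n)⁻¹ • (S n x - ∫ y, S n y ∂ν)) P)) ∧
    (∀ P Q : Measure (EuclideanSpace ℝ (Fin d)),
      IsProbabilityMeasure P → IsProbabilityMeasure Q →
      TendstoInDistribution ν (fun n x => (b n)⁻¹ • (S n x - ∫ y, S n y ∂μ)) P →
      TendstoInDistribution ν (fun n x => (b n)⁻¹ • (S n x - ∫ y, S n y ∂ν)) Q → P = Q) := by
  have hri : Integrable r μ := by
    by_contra h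
    rw [integral_undef h] at hr1
    exact zero_ne_one hr1
  have hνp : IsProbabilityMeasure ν := by
    constructor
    rw [hν, withDensity_apply _ MeasurableSet.univ, Measure.restrict_univ,
      ← ofReal_integral_eq_lintegral_ofReal hri (ae_of_all _ hr0), hr1, ENNReal.ofReal_one]
  have hXb : ∀ j, Measurable (Xbar X j) := fun j => measurable_pi_lambda _ fun i => hX _
  have hgm : ∀ j, Measurable (fun x => g j (Xbar X j x)) := fun j => (hg j).comp (hXb j)
  have hSm : ∀ n, Measurable (S n) := by
    intro n
    have : S n = fun x => ∑ j ∈ Finset.range n, g j (Xbar X j x) := funext (hS n)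
    rw [this]
    exact Finset.measurable_sum _ fun j _ => hgm j
  have hIntν : ∀ f : E → EuclideanSpace ℝ (Fin d), ∫ x, f x ∂ν = ∫ x, r x • f x ∂μ := by
    intro f
    rw [hν, integral_withDensity_eq_integral_toReal_smul hrmeas.ennreal_ofReal
      (ae_of_all _ fun x => ENNReal.ofReal_lt_top)]
    congr 1
    ext1 x
    rw [ENNReal.toReal_ofReal (hr0 x)]
  have hgi : ∀ j, Integrable (fun x => g j (Xbar X j x)) μ := fun j => (hgL j).integrable hp₂
  have hrgi : ∀ j, Integrable (fun x => r x • g j (Xbar X j x)) μ := by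
    intro j
    have : ENNReal.HolderTriple p₁ (1 / p₂ + 1 / p₃)⁻¹ 1 := ⟨by
      simp only [inv_inv, inv_one]
      rw [← add_assoc, ← one_div p₁]; exact hsum⟩
    have hq : (1 / p₂ + 1 / p₃)⁻¹ ≤ p₂ := by
      rw [ENNReal.inv_le_iff_inv_le]
      simp
    exact memLp_one_iff_integrable.1 (((hgL j).mono_exponent hq).smul hrL)
  set C := (eLpNorm (fun x => r x - 1) p₁ μ).toReal with hC
  have hρ : MemLp (fun x => r x - 1) p₁ μ := hrL.sub (memLp_const 1)
  set N : ℕ → ℝ := fun j =>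
    (eLpNorm (fun x => g j (Xbar X j x)) p₂ μ).toReal ^ (1 + p₂.toReal / p₃.toReal) *
          M j ^ (-(p₂.toReal / p₃.toReal)) with hN
  have hN0 : ∀ j, 0 ≤ N j := fun j => by
    have := (hM j).le
    simp only [hN]; positivity
  have key : ∀ j, ‖∫ x, (r x - 1) • g j (Xbar X j x) ∂μ‖ ≤ K * M j * δ j + C * N j := by
    intro j
    classical
    let s : Set (∀ i, 𝒳 (j + i)) := {y | ‖g j y‖ ≤ M j}
    have hs : MeasurableSet s := measurableSet_le (hg j).norm measurable_const
    let A := s.indicator (g j)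
    have hAm : Measurable A := (hg j).indicator hs
    have hAM : ∀ y, ‖A y‖ ≤ M j := fun y => by
      by_cases hy : y ∈ s
      · simp only [A, Set.indicator_of_mem hy]; exact hy
      · simp only [A, Set.indicator_of_notMem hy, norm_zero]; exact (hM j).le
    have b1 := cp_bdd μ X hX δ hδ0 r hri hr1 K hK hdec j A hAm (M j) (hM j) hAM
    have b2 := cp_tail μ p₁ p₂ p₃ hp₂ hp₂' hp₃ hp₃' hsum _ hρ _ (hgL j) (M j) (hM j)
      (fun x => g j (Xbar X j x) - A (Xbar X j x)) (fun x => by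
        by_cases hy : Xbar X j x ∈ s
        · left; simp only [A, Set.indicator_of_mem hy, sub_self]
        · right
          refine ⟨(not_le.1 hy).le, ?_⟩
          simp only [A, Set.indicator_of_notMem hy, sub_zero])
    have hiA : Integrable (fun x => (r x - 1) • A (Xbar X j x)) μ :=
      (hri.sub (integrable_const 1)).smul_bdd (M j)
        (hAm.comp (hXb j)).aestronglyMeasurable (ae_of_all _ fun x => hAM _)
    have hiG : Integrable (fun x => (r x - 1) • g j (Xbar X j x)) μ := by
      refine ((hrgi j).sub (hgi j)).congr (ae_of_all _ fun x => ?_)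
      simp [sub_smul]
    have e : ∫ x, (r x - 1) • g j (Xbar X j x) ∂μ = ∫ x, (r x - 1) • A (Xbar X j x) ∂μ +
        ∫ x, (r x - 1) • (g j (Xbar X j x) - A (Xbar X j x)) ∂μ := by
      simp_rw [smul_sub]
      rw [integral_sub hiG hiA]
      abel
    rw [e]
    exact (norm_add_le _ _).trans (add_le_add b1 b2)
  have hdiff : ∀ n, (∫ x, S n x ∂ν) - ∫ x, S n x ∂μ =
      ∑ j ∈ Finset.range n, ∫ x, (r x - 1) • g j (Xbar X j x) ∂μ := by
    intro n
    rw [hIntν]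
    simp_rw [hS, Finset.smul_sum, sub_smul, one_smul]
    rw [integral_finsetSum _ fun j _ => hrgi j, integral_finsetSum _ fun j _ => hgi j,
      ← Finset.sum_sub_distrib]
    exact Finset.sum_congr rfl fun j _ => (integral_sub (hrgi j) (hgi j)).symm
  have hmain : Tendsto (fun n => ‖(∫ x, S n x ∂ν) - ∫ x, S n x ∂μ‖ / b n) atTop (𝓝 0) := by
    have hlim := h𝓜.const_mul (K + C)
    rw [mul_zero] at hlim
    refine squeeze_zero (fun n => by have := hb0 n; positivity) (fun n => ?_) hlim
    rw [← mul_div_assoc]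
    have := hb0 n
    gcongr
    rw [hdiff, Finset.mul_sum]
    refine norm_sum_le_of_le _ fun j _ => (key j).trans ?_
    change _ ≤ (K + C) * (M j * δ j + N j)
    have h1 := mul_nonneg (hM j).le (hδ0 j)
    have h2 := mul_nonneg hK (hN0 j)
    have h3 : 0 ≤ C * (M j * δ j) := mul_nonneg ENNReal.toReal_nonneg h1
    nlinarith
  have hc : Tendsto (fun n => (b n)⁻¹ • ((∫ x, S n x ∂ν) - ∫ x, S n x ∂μ)) atTop (𝓝 0) := by
    rw [tendsto_zero_iff_norm_tendsto_zero]
    refine hmain.congr fun n => ?_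
    rw [norm_smul, norm_inv, Real.norm_of_nonneg (hb0 n).le, div_eq_inv_mul]
  have hm1 : ∀ v : ℕ → EuclideanSpace ℝ (Fin d), ∀ n,
      Measurable (fun x => (b n)⁻¹ • (S n x - v n)) := fun v n => by
    have := hSm n
    fun_prop
  have fwd : ∀ P : Measure (EuclideanSpace ℝ (Fin d)), IsProbabilityMeasure P →
      _root_.TendstoInDistribution ν (fun n x => (b n)⁻¹ • (S n x - ∫ y, S n y ∂μ)) P →
      _root_.TendstoInDistribution ν (fun n x => (b n)⁻¹ • (S n x - ∫ y, S n y ∂ν)) P := by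
    intro P hP h
    refine cp_slutsky ν _ _ (hm1 _) (hm1 _) _ (by simpa using hc.neg) (fun n x => ?_) P h
    rw [← smul_sub, ← smul_neg]
    congr 1
    abel
  have bwd : ∀ P : Measure (EuclideanSpace ℝ (Fin d)), IsProbabilityMeasure P →
      _root_.TendstoInDistribution ν (fun n x => (b n)⁻¹ • (S n x - ∫ y, S n y ∂ν)) P →
      _root_.TendstoInDistribution ν (fun n x => (b n)⁻¹ • (S n x - ∫ y, S n y ∂μ)) P := by
    intro P hP h
    refine cp_slutsky ν _ _ (hm1 _) (hm1 _) _ hc (fun n x => ?_) P h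
    rw [← smul_sub]
    congr 1
    abel
  refine ⟨hmain, ⟨fun ⟨P, hP, h⟩ => ⟨P, hP, fwd P hP h⟩, fun ⟨P, hP, h⟩ => ⟨P, hP, bwd P hP h⟩⟩, ?_⟩
  intro P Q hP hQ h1 h2
  exact ext_of_forall_integral_eq_of_IsFiniteMeasure fun f =>
    tendsto_nhds_unique (fwd P hP h1 f) (h2 f)
end

section
/- Let (E, 𝓕, μ) be a probability space, (𝒳_i)_{i≥0} measurable spaces, X_i : E → 𝒳_i measurable, 𝒴_n = ∏_{j≥n} 𝒳_j and X̄_n(x) = (X_n(x), X_{n+1}(x), ...). Let (δ_n) be nonnegative reals, r : E → [0,∞) with ∫ r dμ = 1 satisfying the decorrelation property with constant K ≥ 0 relative to (δ_n), and ν the probability measure dν = r dμ. Let g_j : 𝒴_j → ℝ be measurable with g_j∘X̄_j ∈ L²(μ), set G_j = g_j∘X̄_j − ∫ g_j∘X̄_j dμ and S̄_n = Σ_{j=0}^{n-1} G_j. Suppose there are s₁ ∈ [1,∞], s₂, s₃ ∈ [1,∞) with 1/s₁ + 1/s₂ + 1/s₃ = 1, with r+1 ∈ L^{s₁}(μ)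 and G_j G_k ∈ L^{s₂}(μ) for all j, k, and positive numbers M_{k,j}. Then | ∫ S̄_n² dν − ∫ S̄_n² dμ | ≤ 2 𝓥_n, where 𝓥_n = K Σ_{0 ≤ k ≤ j < n} δ_k M_{k,j} + Σ_{0 ≤ k ≤ j < n} ‖r+1‖_{L^{s₁}(μ)} ‖G_j G_k‖_{L^{s₂}(μ)}^{1 + s₂/s₃} M_{k,j}^{−s₂/s₃}. -/
open MeasureTheory Filter Topology Complex
open scoped BigOperators ENNReal RealInnerProductSpace

theorem smc_cast_meas {𝒳 : ℕ → Type*} [∀ i, MeasurableSpace (𝒳 i)] (a b : ℕ) (h : a = b) :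
    Measurable (fun x : 𝒳 a => (h ▸ x : 𝒳 b)) := by
  subst h; exact measurable_id

theorem smc_cast_apply {E : Type*} {𝒳 : ℕ → Type*} (X : ∀ i, E → 𝒳 i) (x : E)
    (a b : ℕ) (h : a = b) : (h ▸ X a x : 𝒳 b) = X b x := by
  subst h; rfl

theorem smc_shift {E : Type*} {𝒳 : ℕ → Type*} [∀ i, MeasurableSpace (𝒳 i)]
    (X : ∀ i, E → 𝒳 i) (k j : ℕ) (hkj : k ≤ j) :
    ∃ T : (∀ i, 𝒳 (k + i)) → (∀ i, 𝒳 (j + i)), Measurable T ∧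
      ∀ x, T (Xbar X k x) = Xbar X j x := by
  have e : ∀ i, k + (j - k + i) = j + i := fun i => by omega
  refine ⟨fun y i => (e i ▸ y (j - k + i) : 𝒳 (j + i)), ?_, ?_⟩
  · refine measurable_pi_lambda _ fun i => ?_
    exact (smc_cast_meas _ _ (e i)).comp (measurable_pi_apply _)
  · intro x
    funext i
    exact smc_cast_apply X x _ _ (e i)

theorem smc_sum (a : ℕ → ℕ → ℝ) (b : ℕ → ℕ → ℝ) (hsymm : ∀ j k, a j k = a k j)
    (hab : ∀ j k, k ≤ j → |a j k| ≤ b j k) (n : ℕ) :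
    |∑ j ∈ Finset.range n, ∑ k ∈ Finset.range n, a j k| ≤
      2 * ∑ j ∈ Finset.range n, ∑ k ∈ Finset.range (j + 1), b j k := by
  induction n with
  | zero => simp
  | succ n ih =>
    have h1 : ∑ j ∈ Finset.range (n + 1), ∑ k ∈ Finset.range (n + 1), a j k =
        ∑ j ∈ Finset.range n, ∑ k ∈ Finset.range n, a j k
          + 2 * ∑ k ∈ Finset.range n, a n k + a n n := by
      rw [Finset.sum_range_succ]
      simp_rw [Finset.sum_range_succ _ n]
      rw [Finset.sum_add_distrib, Finset.sum_congr rfl (fun j _ => hsymm j n)]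
      ring
    have h2 : |∑ k ∈ Finset.range n, a n k| ≤ ∑ k ∈ Finset.range n, b n k :=
      (Finset.abs_sum_le_sum_abs _ _).trans (Finset.sum_le_sum fun k hk =>
        hab n k (Finset.mem_range.1 hk).le)
    have h3 := hab n n le_rfl
    rw [h1, Finset.sum_range_succ, Finset.sum_range_succ _ n]
    rw [abs_le] at *
    have := abs_nonneg (a n n)
    constructor <;> linarith [(abs_nonneg (a n n)).trans (hab n n le_rfl)]

theorem smc_tail {E : Type*} [MeasurableSpace E] (μ : Measure E)
    (R H : E → ℝ) (s₁ s₂ s₃ : ℝ≥0∞) (hs₂ : 1 ≤ s₂) (hs₂' : s₂ ≠ ∞)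
    (hs₃ : 1 ≤ s₃) (hs₃' : s₃ ≠ ∞)
    (hsum : 1 / s₁ + 1 / s₂ + 1 / s₃ = 1)
    (hR0 : ∀ x, 0 ≤ R x)
    (hR : MemLp R s₁ μ) (hH : MemLp H s₂ μ) :
    Integrable (fun x => R x * ‖H x‖ ^ (1 + s₂.toReal / s₃.toReal)) μ ∧
    ∫ x, R x * ‖H x‖ ^ (1 + s₂.toReal / s₃.toReal) ∂μ ≤
      (eLpNorm R s₁ μ).toReal * (eLpNorm H s₂ μ).toReal ^ (1 + s₂.toReal / s₃.toReal) := by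
  obtain ⟨p, hp⟩ : ∃ p : ℝ, p = 1 + s₂.toReal / s₃.toReal := ⟨_, rfl⟩
  rw [← hp]
  have h2 : 0 < s₂.toReal := ENNReal.toReal_pos (by positivity) hs₂'
  have h3 : 0 < s₃.toReal := ENNReal.toReal_pos (by positivity) hs₃'
  have hp0 : 0 < p := by rw [hp]; positivity
  have hs20 : s₂ ≠ 0 := by positivity
  have hs30 : s₃ ≠ 0 := by positivity
  obtain ⟨q, hq⟩ : ∃ q : ℝ≥0∞, q = (s₂⁻¹ + s₃⁻¹)⁻¹ := ⟨_, rfl⟩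
  have hqp : q * ENNReal.ofReal p = s₂ := by
    have : ENNReal.ofReal p = s₂ * (s₂⁻¹ + s₃⁻¹) := by
      rw [hp, ENNReal.ofReal_add zero_le_one (by positivity), ENNReal.ofReal_div_of_pos h3,
        ENNReal.ofReal_toReal hs₂', ENNReal.ofReal_toReal hs₃', mul_add,
        ENNReal.mul_inv_cancel hs20 hs₂', ENNReal.ofReal_one, div_eq_mul_inv]
    rw [this, hq, mul_comm s₂, ← mul_assoc, ENNReal.inv_mul_cancel, one_mul]
    · simp [hs₂']
    · simp [hs20, hs30]
  have : ENNReal.HolderTriple s₁ q 1 := ⟨by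
    rw [hq, inv_inv, inv_one, ← hsum]; simp [one_div, add_assoc]⟩
  have hn : eLpNorm (fun x => ‖H x‖ ^ p) q μ = eLpNorm H s₂ μ ^ p := by
    rw [eLpNorm_norm_rpow H hp0, hqp]
  have hmeas : AEStronglyMeasurable (fun x => ‖H x‖ ^ p) μ :=
    (hH.1.norm.aemeasurable.pow_const p).aestronglyMeasurable
  have hle : eLpNorm (fun x => R x * ‖H x‖ ^ p) 1 μ ≤ eLpNorm R s₁ μ * eLpNorm H s₂ μ ^ p := by
    rw [← hn]
    have := eLpNorm_smul_le_mul_eLpNorm (p := s₁) (q := q) (r := 1) hmeas hR.1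
    simpa only [Pi.smul_def', Pi.mul_def, smul_eq_mul] using this
  have hfin : eLpNorm R s₁ μ * eLpNorm H s₂ μ ^ p ≠ ∞ :=
    ENNReal.mul_ne_top hR.2.ne (ENNReal.rpow_ne_top_of_nonneg hp0.le hH.2.ne)
  have hint : Integrable (fun x => R x * ‖H x‖ ^ p) μ :=
    memLp_one_iff_integrable.1 ⟨hR.1.mul hmeas, hle.trans_lt hfin.lt_top⟩
  refine ⟨hint, ?_⟩
  have := ENNReal.toReal_mono hfin hle
  rw [ENNReal.toReal_mul, ← ENNReal.toReal_rpow] at this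
  refine le_trans (le_of_eq ?_) this
  rw [eLpNorm_one_eq_lintegral_enorm, ← integral_norm_eq_lintegral_enorm hint.1]
  refine integral_congr_ae (Eventually.of_forall fun x => ?_)
  exact (Real.norm_of_nonneg (mul_nonneg (hR0 x) (Real.rpow_nonneg (norm_nonneg _) _))).symm

theorem smc_pair
    {E : Type*} [MeasurableSpace E] (μ : Measure E) [IsProbabilityMeasure μ]
    {𝒳 : ℕ → Type*} [∀ i, MeasurableSpace (𝒳 i)]
    (X : ∀ i, E → 𝒳 i) (hX : ∀ i, Measurable (X i))
    (δ : ℕ → ℝ)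
    (r : E → ℝ) (hrmeas : Measurable r) (hr0 : ∀ x, 0 ≤ r x) (hr1 : ∫ x, r x ∂μ = 1)
    (K : ℝ) (hdec : Decorrelates μ X r K δ)
    (s₁ s₂ s₃ : ℝ≥0∞) (hs₂ : 1 ≤ s₂) (hs₂' : s₂ ≠ ∞)
    (hs₃ : 1 ≤ s₃) (hs₃' : s₃ ≠ ∞)
    (hsum : 1 / s₁ + 1 / s₂ + 1 / s₃ = 1)
    (hrL : MemLp (fun x => r x + 1) s₁ μ) (k : ℕ) (h : (∀ i, 𝒳 (k + i)) → ℝ)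
    (hh : Measurable h) (H : E → ℝ) (hHh : ∀ x, H x = h (Xbar X k x))
    (hH : MemLp H s₂ μ) (M : ℝ) (hM : 0 < M) :
    Integrable (fun x => r x * H x) μ ∧
    |(∫ x, r x * H x ∂μ) - ∫ x, H x ∂μ| ≤ K * (δ k * M) +
      (eLpNorm (fun x => r x + 1) s₁ μ).toReal *
        (eLpNorm H s₂ μ).toReal ^ (1 + s₂.toReal / s₃.toReal) *
        M ^ (-(s₂.toReal / s₃.toReal)) := by
  obtain ⟨hTi, hTle⟩ := smc_tail μ (fun x => r x + 1) H s₁ s₂ s₃ hs₂ hs₂' hs₃ hs₃' hsum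
    (fun x => by linarith [hr0 x]) hrL hH
  set t : ℝ := s₂.toReal / s₃.toReal with ht
  have ht0 : 0 ≤ t := by positivity
  have hri : Integrable r μ := by
    by_contra hc
    rw [integral_undef hc] at hr1
    exact zero_ne_one hr1
  have hHi : Integrable H μ := memLp_one_iff_integrable.1 (hH.mono_exponent hs₂)
  have hXb : Measurable (Xbar X k) := measurable_pi_lambda _ fun i => hX _
  let f : (∀ i, 𝒳 (k + i)) → ℝ := fun y => if |h y| ≤ M then h y else 0
  have hf : Measurable f := Measurable.ite (measurableSet_le hh.abs measurable_const) hh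
    measurable_const
  have hfM : ∀ y, |f y| ≤ M := by
    intro y
    by_cases hy : |h y| ≤ M
    · simp [f, hy]
    · simp [f, hy, hM.le]
  let F : E → ℝ := fun x => f (Xbar X k x)
  have hFm : Measurable F := hf.comp hXb
  have hFi : Integrable F μ :=
    Integrable.of_bound hFm.aestronglyMeasurable M (Eventually.of_forall fun x => hfM _)
  have hrFi : Integrable (fun x => r x * F x) μ :=
    hri.mul_bdd (c := M) hFm.aestronglyMeasurable (Eventually.of_forall fun x => hfM _)
  have hpt : ∀ x, |H x - F x| ≤ ‖H x‖ ^ (1 + t) * M ^ (-t) := by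
    intro x
    by_cases hy : |h (Xbar X k x)| ≤ M
    · simp only [F, f, hy, if_true, hHh, sub_self, abs_zero]
      positivity
    · simp only [F, f, hy, if_false, hHh, sub_zero]
      push Not at hy
      have h0 : 0 < |h (Xbar X k x)| := hM.trans hy
      rw [Real.norm_eq_abs, Real.rpow_add h0, Real.rpow_one, mul_assoc, Real.rpow_neg hM.le]
      have : M ^ t ≤ |h (Xbar X k x)| ^ t := Real.rpow_le_rpow hM.le hy.le ht0
      have h1 : 1 ≤ |h (Xbar X k x)| ^ t * (M ^ t)⁻¹ := by
        rw [← div_eq_mul_inv, le_div_iff₀ (by positivity)]; linarith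
      nlinarith
  have hTi' := hTi.mul_const (M ^ (-t))
  have hrHF : Integrable (fun x => r x * (H x - F x)) μ := by
    refine hTi'.mono' (hrmeas.aestronglyMeasurable.mul (hHi.1.sub hFm.aestronglyMeasurable))
      (Eventually.of_forall fun x => ?_)
    rw [Real.norm_eq_abs, abs_mul, abs_of_nonneg (hr0 x), mul_assoc]
    exact mul_le_mul (by linarith) (hpt x) (abs_nonneg _) (by linarith [hr0 x])
  have hrH : Integrable (fun x => r x * H x) μ := by
    refine (hrFi.add hrHF).congr (Eventually.of_forall fun x => ?_)
    simp only [Pi.add_apply]; ring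
  refine ⟨hrH, ?_⟩
  have hA : |(∫ x, r x * F x ∂μ) - ∫ x, F x ∂μ| ≤ K * M * δ k := by
    have := hdec k (fun y => ((f y : ℝ) : ℂ)) M (by fun_prop) (fun y => by simpa using hfM y)
    rw [hr1] at this
    have e1 : ∫ x, (r x : ℂ) * ((f (Xbar X k x) : ℝ) : ℂ) ∂μ
        = ((∫ x, r x * F x ∂μ : ℝ) : ℂ) := by
      rw [← integral_complex_ofReal]; simp [F]
    have e2 : ∫ x, ((f (Xbar X k x) : ℝ) : ℂ) ∂μ = ((∫ x, F x ∂μ : ℝ) : ℂ) := by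
      rw [← integral_complex_ofReal]
    rw [e1, e2, Complex.ofReal_one, one_mul, ← Complex.ofReal_sub, Complex.norm_real] at this
    exact this
  have hsplit : (∫ x, r x * H x ∂μ) - ∫ x, H x ∂μ =
      ((∫ x, r x * F x ∂μ) - ∫ x, F x ∂μ) + ∫ x, (r x - 1) * (H x - F x) ∂μ := by
    rw [← integral_sub hrH hHi, ← integral_sub hrFi hFi, 
      ← integral_add (f := fun x => r x * F x - F x) (hrFi.sub hFi)]
    · congr 1; funext x; ring
    · refine (hrHF.sub (hHi.sub hFi)).congr (Eventually.of_forall fun x => ?_)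
      simp only [Pi.sub_apply]; ring
  have hB : |∫ x, (r x - 1) * (H x - F x) ∂μ| ≤
      (eLpNorm (fun x => r x + 1) s₁ μ).toReal *
        (eLpNorm H s₂ μ).toReal ^ (1 + t) * M ^ (-t) := by
    have := norm_integral_le_of_norm_le (f := fun x => (r x - 1) * (H x - F x)) hTi'
      (Eventually.of_forall fun x => by
        rw [Real.norm_eq_abs, abs_mul, mul_assoc]
        refine mul_le_mul ?_ (hpt x) (abs_nonneg _) (by linarith [hr0 x])
        rw [abs_le]; constructor <;> linarith [hr0 x])
    rw [integral_mul_const] at this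
    exact this.trans (mul_le_mul_of_nonneg_right hTle (by positivity))
  rw [hsplit]
  refine (abs_add_le _ _).trans (add_le_add (hA.trans (le_of_eq (by ring))) hB)

/-- Second-moment comparison inequality from the proof of Proposition 2.5: with
`Gⱼ = gⱼ∘X̄ⱼ − ∫ gⱼ∘X̄ⱼ dμ` and `S̄ₙ = ∑_{j<n} Gⱼ`, exponents `1/s₁ + 1/s₂ + 1/s₃ = 1`,
`r+1 ∈ L^{s₁}(μ)`, `GⱼG_k ∈ L^{s₂}(μ)` and positive numbers `M_{k,j}`, one has
`|∫ S̄ₙ² dν − ∫ S̄ₙ² dμ| ≤ 2𝓥ₙ` where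
`𝓥ₙ = K ∑_{0≤k≤j<n} δ_k M_{k,j} + ∑_{0≤k≤j<n} ‖r+1‖_{s₁} ‖GⱼG_k‖_{s₂}^{1+s₂/s₃} M_{k,j}^{−s₂/s₃}`. -/
theorem second_moment_comparison
    {E : Type*} [MeasurableSpace E] (μ : Measure E) [IsProbabilityMeasure μ]
    {𝒳 : ℕ → Type*} [∀ i, MeasurableSpace (𝒳 i)]
    (X : ∀ i, E → 𝒳 i) (hX : ∀ i, Measurable (X i))
    (δ : ℕ → ℝ) (hδ0 : ∀ n, 0 ≤ δ n)
    (r : E → ℝ) (hrmeas : Measurable r) (hr0 : ∀ x, 0 ≤ r x) (hr1 : ∫ x, r x ∂μ = 1)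
    (K : ℝ) (hK : 0 ≤ K) (hdec : Decorrelates μ X r K δ)
    (ν : Measure E) (hν : ν = μ.withDensity (fun x => ENNReal.ofReal (r x)))
    (g : ∀ j, (∀ i, 𝒳 (j + i)) → ℝ) (hg : ∀ j, Measurable (g j))
    (hgL2 : ∀ j, MemLp (fun x => g j (Xbar X j x)) 2 μ)
    (G : ℕ → E → ℝ) (hG : ∀ j x, G j x = g j (Xbar X j x) - ∫ y, g j (Xbar X j y) ∂μ)
    (Sbar : ℕ → E → ℝ) (hSbar : ∀ n x, Sbar n x = ∑ j ∈ Finset.range n, G j x)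
    (s₁ s₂ s₃ : ℝ≥0∞) (hs₁ : 1 ≤ s₁) (hs₂ : 1 ≤ s₂) (hs₂' : s₂ ≠ ∞)
    (hs₃ : 1 ≤ s₃) (hs₃' : s₃ ≠ ∞)
    (hsum : 1 / s₁ + 1 / s₂ + 1 / s₃ = 1)
    (hrL : MemLp (fun x => r x + 1) s₁ μ)
    (hGGL : ∀ j k, MemLp (fun x => G j x * G k x) s₂ μ)
    (M : ℕ → ℕ → ℝ) (hM : ∀ k j, 0 < M k j) :
    ∀ n, |(∫ x, (Sbar n x) ^ 2 ∂ν) - ∫ x, (Sbar n x) ^ 2 ∂μ| ≤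
      2 * (K * (∑ j ∈ Finset.range n, ∑ k ∈ Finset.range (j + 1), δ k * M k j) +
        ∑ j ∈ Finset.range n, ∑ k ∈ Finset.range (j + 1),
          (eLpNorm (fun x => r x + 1) s₁ μ).toReal *
            (eLpNorm (fun x => G j x * G k x) s₂ μ).toReal ^ (1 + s₂.toReal / s₃.toReal) *
            M k j ^ (-(s₂.toReal / s₃.toReal))) := by
  intro n
  have hGm : ∀ k j, k ≤ j → ∃ h : (∀ i, 𝒳 (k + i)) → ℝ, Measurable h ∧
      ∀ x, G j x * G k x = h (Xbar X k x) := by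
    intro k j hkj
    obtain ⟨T, hT, hTX⟩ := smc_shift X k j hkj
    refine ⟨fun y => (g j (T y) - ∫ y, g j (Xbar X j y) ∂μ) *
      (g k y - ∫ y, g k (Xbar X k y) ∂μ), ?_, ?_⟩
    · exact (((hg j).comp hT).sub_const _).mul ((hg k).sub_const _)
    · intro x
      simp only [hTX, hG]
  have key : ∀ j k, k ≤ j → Integrable (fun x => r x * (G j x * G k x)) μ ∧
      |(∫ x, r x * (G j x * G k x) ∂μ) - ∫ x, G j x * G k x ∂μ| ≤ K * (δ k * M k j) +
      (eLpNorm (fun x => r x + 1) s₁ μ).toReal *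
        (eLpNorm (fun x => G j x * G k x) s₂ μ).toReal ^ (1 + s₂.toReal / s₃.toReal) *
        M k j ^ (-(s₂.toReal / s₃.toReal)) := fun j k hkj => by
    obtain ⟨h, hh, hHh⟩ := hGm k j hkj
    exact smc_pair μ X hX δ r hrmeas hr0 hr1 K hdec s₁ s₂ s₃ hs₂ hs₂' hs₃ hs₃' hsum hrL k h hh
      (fun x => G j x * G k x) hHh (hGGL j k) (M k j) (hM k j)
  have hI : ∀ j k, Integrable (fun x => G j x * G k x) μ := fun j k =>
    memLp_one_iff_integrable.1 ((hGGL j k).mono_exponent hs₂)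
  have hrI : ∀ j k, Integrable (fun x => r x * (G j x * G k x)) μ := by
    intro j k
    rcases le_total k j with hkj | hkj
    · exact (key j k hkj).1
    · simpa only [mul_comm (G k _) (G j _)] using (key k j hkj).1
  have hsq : ∀ x, Sbar n x ^ 2 =
      ∑ j ∈ Finset.range n, ∑ k ∈ Finset.range n, G j x * G k x := by
    intro x
    rw [hSbar, sq, Finset.sum_mul_sum]
  have e1 : ∫ x, Sbar n x ^ 2 ∂ν =
      ∑ j ∈ Finset.range n, ∑ k ∈ Finset.range n, ∫ x, r x * (G j x * G k x) ∂μ := by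
    rw [hν, integral_withDensity_eq_integral_toReal_smul hrmeas.ennreal_ofReal
      (Eventually.of_forall fun x => ENNReal.ofReal_lt_top)]
    simp only [ENNReal.toReal_ofReal (hr0 _), hsq, smul_eq_mul, Finset.mul_sum]
    rw [integral_finsetSum _ fun j _ => integrable_finsetSum _ fun k _ => hrI j k]
    exact Finset.sum_congr rfl fun j _ => integral_finsetSum _ fun k _ => hrI j k
  have e2 : ∫ x, Sbar n x ^ 2 ∂μ =
      ∑ j ∈ Finset.range n, ∑ k ∈ Finset.range n, ∫ x, G j x * G k x ∂μ := by
    simp only [hsq]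
    rw [integral_finsetSum _ fun j _ => integrable_finsetSum _ fun k _ => hI j k]
    exact Finset.sum_congr rfl fun j _ => integral_finsetSum _ fun k _ => hI j k
  have := smc_sum (fun j k => (∫ x, r x * (G j x * G k x) ∂μ) - ∫ x, G j x * G k x ∂μ)
    (fun j k => K * (δ k * M k j) +
      (eLpNorm (fun x => r x + 1) s₁ μ).toReal *
        (eLpNorm (fun x => G j x * G k x) s₂ μ).toReal ^ (1 + s₂.toReal / s₃.toReal) *
        M k j ^ (-(s₂.toReal / s₃.toReal)))
    (fun j k => by simp only [mul_comm (G j _) (G k _)]) (fun j k hkj => (key j k hkj).2) n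
  rw [e1, e2]
  simp only [Finset.sum_sub_distrib, Finset.sum_add_distrib, ← Finset.mul_sum] at this ⊢
  exact this
end

section
/- Let (E, 𝓕, μ) be a probability space and (X_j)_{j≥0} a sequence of random variables on E taking values in measurable spaces (𝒳_j). For n ≤ m let 𝓕_{n,m} = σ(X_n, ..., X_{n+m}) and 𝓕_{n,∞} = σ(X_j : j ≥ n). For sub-σ-algebras 𝓖, 𝓗 of 𝓕 set α(𝓖,𝓗) = sup{ |μ(A ∩ B) − μ(A)μ(B)| : A ∈ 𝓖, B ∈ 𝓗 }, and define the strong mixing coefficients α_n = sup_{k≥0} α(𝓕_{0,k}, 𝓕_{k+n,∞}). Let p ∈ [1,∞], let (γ_n) be nonnegative reals, and let s ∈ L^p(μ) be a real-valued function with ∫ s dμ = 1 satisfying ‖ s − E[s | X_0, ..., X_n] ‖_{L¹(μ)} ≤ γ_n for every n. Then for every n ≥ 1 and every bounded measurable function f of (X_n, X_{n+1}, ...): | ∫ s(x) f(X̄_n(x)) dμ(x) − ∫ f(X̄_n(x)) dμ(x) | ≤ ( 6 (α_{[n/2]})^{1 − 1/p} + 2 γ_{[n/2]} ) · ‖s‖_{L^p(μ)}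 · sup|f|, where X̄_n = (X_n, X_{n+1}, ...), [n/2] is the integer part of n/2, and 1/∞ := 0. -/
open MeasureTheory Filter Topology
open scoped ENNReal

namespace AlphaMix

lemma sign_aux {E : Type*} {m m0 : MeasurableSpace E} (hm : m ≤ m0) (μ : Measure E)
    [IsProbabilityMeasure μ] {ξ Y : E → ℝ} {c : ℝ} (hc : 0 ≤ c)
    (hξ : StronglyMeasurable[m] ξ) (hb : ∀ᵐ x ∂μ, ‖ξ x‖ ≤ c) (hY : Integrable Y μ) :
    ∃ A, MeasurableSet[m] A ∧
      |∫ x, ξ x * Y x ∂μ| ≤ c * ∫ x, (A.indicator (fun _ => (2 : ℝ)) x - 1) * Y x ∂μ := by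
  have hsm : StronglyMeasurable[m] (μ[Y | m]) := stronglyMeasurable_condExp
  have key : ∀ (u : E → ℝ) (d : ℝ), StronglyMeasurable[m] u → (∀ᵐ x ∂μ, ‖u x‖ ≤ d) →
      ∫ x, u x * Y x ∂μ = ∫ x, u x * (μ[Y | m]) x ∂μ := by
    intro u d hu hd
    rw [← integral_condExp hm (f := fun x => u x * Y x)]
    exact integral_congr_ae (condExp_stronglyMeasurable_mul_of_bound hm hu hY d hd)
  have hAm : MeasurableSet[m] {x | 0 ≤ (μ[Y | m]) x} :=
    hsm.measurable measurableSet_Ici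
  refine ⟨{x | 0 ≤ (μ[Y | m]) x}, hAm, ?_⟩
  rw [key ξ c hξ hb, key (fun x => {x | 0 ≤ (μ[Y | m]) x}.indicator (fun _ => (2 : ℝ)) x - 1) 3
    ((stronglyMeasurable_const.indicator hAm).sub
    stronglyMeasurable_const) ?_]
  · rw [← integral_const_mul]
    refine (abs_integral_le_integral_abs).trans (integral_mono_ae ?_ ?_ ?_)
    · exact (integrable_condExp.bdd_mul (hξ.mono hm).aestronglyMeasurable hb).abs
    · refine (integrable_condExp.bdd_mul (c := 3) ?_ ?_).const_mul c
      · exact (((stronglyMeasurable_const.indicator hAm).sub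
          stronglyMeasurable_const).mono hm).aestronglyMeasurable
      · refine Eventually.of_forall fun x => ?_
        by_cases h : x ∈ {x | 0 ≤ (μ[Y | m]) x} <;> simp [Set.indicator, h] <;> norm_num
    · filter_upwards [hb] with x hx
      rw [Real.norm_eq_abs] at hx
      simp only [Set.indicator, Set.mem_setOf_eq, abs_mul]
      split_ifs with h
      · rw [abs_of_nonneg h]; nlinarith
      · rw [abs_of_neg (not_le.1 h)]; nlinarith [not_le.1 h]
  · refine Eventually.of_forall fun x => ?_
    by_cases h : x ∈ {x | 0 ≤ (μ[Y | m]) x} <;> simp [Set.indicator, h] <;> norm_num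

lemma int_center {E : Type*} {m0 : MeasurableSpace E} (μ : Measure E)
    [IsProbabilityMeasure μ] {u v : E → ℝ} (hu : Integrable u μ)
    (huv : Integrable (fun x => u x * v x) μ) :
    ∫ x, u x * (v x - ∫ y, v y ∂μ) ∂μ
      = ∫ x, u x * v x ∂μ - (∫ x, u x ∂μ) * ∫ x, v x ∂μ := by
  simp_rw [mul_sub]
  rw [integral_sub huv (hu.mul_const _), integral_mul_const]

lemma cov_ind {E : Type*} {m0 : MeasurableSpace E} (μ : Measure E)
    [IsProbabilityMeasure μ] {A B : Set E} (hA : MeasurableSet A) (hB : MeasurableSet B) :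
    ∫ x, (B.indicator (fun _ => (2 : ℝ)) x - 1) * ((A.indicator (fun _ => (2 : ℝ)) x - 1)
      - ∫ y, (A.indicator (fun _ => (2 : ℝ)) y - 1) ∂μ) ∂μ
    = 4 * (μ.real (A ∩ B) - μ.real A * μ.real B) := by
  have i2 : ∀ S : Set E, MeasurableSet S →
      Integrable (S.indicator (fun _ => (2 : ℝ))) μ := fun S hS =>
    (integrable_const _).indicator hS
  have e2 : ∀ S : Set E, MeasurableSet S →
      ∫ x, S.indicator (fun _ => (2 : ℝ)) x ∂μ = 2 * μ.real S := fun S hS => by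
    rw [integral_indicator hS]; simp [mul_comm]
  have e : ∀ S : Set E, MeasurableSet S →
      ∫ x, (S.indicator (fun _ => (2 : ℝ)) x - 1) ∂μ = 2 * μ.real S - 1 := fun S hS => by
    rw [integral_sub (i2 S hS) (integrable_const _), e2 S hS]; simp
  have hprod : ∀ x, (B.indicator (fun _ => (2 : ℝ)) x - 1) *
      (A.indicator (fun _ => (2 : ℝ)) x - 1) =
      2 * (A ∩ B).indicator (fun _ => (2 : ℝ)) x - B.indicator (fun _ => (2 : ℝ)) x
        - A.indicator (fun _ => (2 : ℝ)) x + 1 := by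
    intro x
    by_cases h1 : x ∈ A <;> by_cases h2 : x ∈ B <;> simp [h1, h2] <;> norm_num
  have iAB := (i2 _ (hA.inter hB)).const_mul 2
  have h3 : Integrable (fun x => 2 * (A ∩ B).indicator (fun _ => (2 : ℝ)) x
      - B.indicator (fun _ => (2 : ℝ)) x) μ := iAB.sub (i2 B hB)
  have h4 : Integrable (fun x => 2 * (A ∩ B).indicator (fun _ => (2 : ℝ)) x
      - B.indicator (fun _ => (2 : ℝ)) x - A.indicator (fun _ => (2 : ℝ)) x) μ := h3.sub (i2 A hA)
  have h5 := h4.add (integrable_const (1 : ℝ))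
  rw [int_center μ (u := fun x => B.indicator (fun _ => (2 : ℝ)) x - 1)
    (v := fun x => A.indicator (fun _ => (2 : ℝ)) x - 1)
    ((i2 B hB).sub (integrable_const _))
    (by simp_rw [hprod]; exact h5), e A hA, e B hB]
  simp_rw [hprod]
  rw [integral_add h4 (integrable_const _), integral_sub h3 (i2 A hA),
    integral_sub iAB (i2 B hB), integral_const_mul, e2 _ hA, e2 _ hB, e2 _ (hA.inter hB)]
  simp
  ring

lemma cov_bdd {E : Type*} {G H m0 : MeasurableSpace E} (hG : G ≤ m0) (hH : H ≤ m0)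
    (μ : Measure E) [IsProbabilityMeasure μ] {ξ η : E → ℝ} {a c C : ℝ} (hc : 0 ≤ c) (hC : 0 ≤ C)
    (ha : ∀ A B, MeasurableSet[G] A → MeasurableSet[H] B →
      |μ.real (A ∩ B) - μ.real A * μ.real B| ≤ a)
    (hξ : StronglyMeasurable[G] ξ) (hb : ∀ᵐ x ∂μ, ‖ξ x‖ ≤ c)
    (hη : StronglyMeasurable[H] η) (hηb : ∀ x, ‖η x‖ ≤ C) :
    |∫ x, ξ x * (η x - ∫ y, η y ∂μ) ∂μ| ≤ 4 * a * c * C := by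
  have hηi : Integrable η μ :=
    Integrable.of_bound (hη.mono hH).aestronglyMeasurable C (Eventually.of_forall hηb)
  obtain ⟨A, hA, h1⟩ := sign_aux hG μ hc hξ hb (hηi.sub (integrable_const (∫ y, η y ∂μ)))
  set u : E → ℝ := fun x => A.indicator (fun _ => (2 : ℝ)) x - 1 with hu
  have hui : Integrable u μ :=
    ((integrable_const _).indicator (hG _ hA)).sub (integrable_const _)
  obtain ⟨B, hB, h2⟩ := sign_aux hH μ hC hη (Eventually.of_forall hηb)
    (hui.sub (integrable_const (∫ y, u y ∂μ)))
  have hηu : Integrable (fun x => η x * u x) μ :=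
    hui.bdd_mul (hη.mono hH).aestronglyMeasurable (Eventually.of_forall hηb)
  have huη : Integrable (fun x => u x * η x) μ := by simpa only [mul_comm] using hηu
  have h3 : ∫ x, u x * (η x - ∫ y, η y ∂μ) ∂μ = ∫ x, η x * (u x - ∫ y, u y ∂μ) ∂μ := by
    rw [int_center μ hui huη, int_center μ hηi hηu, mul_comm (∫ x, u x ∂μ)]
    simp_rw [mul_comm]
  have h4 := cov_ind μ (hG _ hA) (hH _ hB)
  have h5 := (abs_le.1 (ha A B hA hB)).2
  simp only [Pi.sub_apply] at h1 h2
  change _ ≤ c * ∫ x, u x * (η x - ∫ y, η y ∂μ) ∂μ at h1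
  rw [h4] at h2
  calc _ ≤ _ := h1
    _ ≤ c * (C * (4 * a)) := by
      rw [h3]
      gcongr
      exact (le_abs_self _).trans (h2.trans (by gcongr))
    _ = _ := by ring

lemma cov_Lp_pos {E : Type*} {G H m0 : MeasurableSpace E} (hG : G ≤ m0) (hH : H ≤ m0)
    (μ : Measure E) [IsProbabilityMeasure μ] {ξ η : E → ℝ} {a C : ℝ} (ha0 : 0 < a) (hC : 0 ≤ C)
    (ha : ∀ A B, MeasurableSet[G] A → MeasurableSet[H] B →
      |μ.real (A ∩ B) - μ.real A * μ.real B| ≤ a)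
    {p : ℝ≥0∞} (hp : 1 ≤ p)
    (hξ : StronglyMeasurable[G] ξ) (hξp : MemLp ξ p μ)
    (hη : StronglyMeasurable[H] η) (hηb : ∀ x, ‖η x‖ ≤ C) :
    |∫ x, ξ x * (η x - ∫ y, η y ∂μ) ∂μ| ≤
      6 * a ^ (1 - (1 / p).toReal) * lpNorm ξ p μ * C := by
  have hp0 : p ≠ 0 := (zero_lt_one.trans_le hp).ne'
  have hN0 : 0 ≤ lpNorm ξ p μ := lpNorm_nonneg
  by_cases hN : lpNorm ξ p μ = 0
  · have h0 := (lpNorm_eq_zero hξp hp0).1 hN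
    have := cov_bdd hG hH μ le_rfl hC ha hξ
      (by filter_upwards [h0] with x hx; simp [hx]) hη hηb
    simpa [hN] using this
  by_cases hpt : p = ∞
  · subst hpt
    have := cov_bdd hG hH μ hN0 hC ha hξ (ae_le_lpNorm_exponent_top hξp) hη hηb
    refine this.trans ?_
    simp only [one_div, ENNReal.inv_top, ENNReal.toReal_zero, sub_zero, Real.rpow_one]
    gcongr
    norm_num
  have hNpos : 0 < lpNorm ξ p μ := lt_of_le_of_ne hN0 (Ne.symm hN)
  set N := lpNorm ξ p μ with hNdef
  set q := p.toReal with hq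
  have hq1 : 1 ≤ q := by
    rwa [hq, ← ENNReal.toReal_one, ENNReal.toReal_le_toReal ENNReal.one_ne_top hpt]
  have hq0 : 0 < q := by linarith
  have hqi : (1 / p).toReal = 1 / q := by simp [hq]
  rw [hqi]
  have hI : ∫ x, ‖ξ x‖ ^ q ∂μ = N ^ q := by
    rw [hNdef, lpNorm_eq_integral_norm_rpow_toReal hp0 hpt hξp.1, ← Real.rpow_mul
      (integral_nonneg fun x => by positivity), inv_mul_cancel₀ hq0.ne', Real.rpow_one]
  set c := N * a ^ (-(1 / q)) with hcdef
  have hc : 0 < c := by positivity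
  have hηi : Integrable η μ :=
    Integrable.of_bound (hη.mono hH).aestronglyMeasurable C (Eventually.of_forall hηb)
  have hmean : |∫ y, η y ∂μ| ≤ C := by
    have := norm_integral_le_of_norm_le_const (μ := μ) (Eventually.of_forall hηb)
    simpa using this
  set S : Set E := {x | ‖ξ x‖ ≤ c} with hS
  have hSm : MeasurableSet[G] S := hξ.norm.measurable measurableSet_Iic
  have h1 := cov_bdd hG hH μ hc.le hC ha (hξ.indicator hSm)
    (Eventually.of_forall fun x => by
      by_cases hx : x ∈ S
      · rw [Set.indicator_of_mem hx]; exact hx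
      · simp [hx, hc.le]) hη hηb
  have hξi : Integrable ξ μ := hξp.integrable hp
  have hwi : Integrable (fun x => η x - ∫ y, η y ∂μ) μ := hηi.sub (integrable_const _)
  have hwb : ∀ x, ‖η x - ∫ y, η y ∂μ‖ ≤ 2 * C := fun x => by
    refine (norm_sub_le _ _).trans ?_
    have := hηb x
    rw [Real.norm_eq_abs (∫ y, η y ∂μ)]
    linarith
  have hint : ∀ T : Set E, MeasurableSet T →
      Integrable (fun x => T.indicator ξ x * (η x - ∫ y, η y ∂μ)) μ := fun T hT =>
    (hξi.indicator hT).mul_bdd hwi.aestronglyMeasurable (Eventually.of_forall hwb)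
  have hsplit : ∫ x, ξ x * (η x - ∫ y, η y ∂μ) ∂μ =
      ∫ x, S.indicator ξ x * (η x - ∫ y, η y ∂μ) ∂μ +
      ∫ x, Sᶜ.indicator ξ x * (η x - ∫ y, η y ∂μ) ∂μ := by
    rw [← integral_add (hint _ (hG _ hSm)) (hint _ (hG _ hSm).compl)]
    congr 1; ext x
    rw [← add_mul]
    by_cases hx : x ∈ S <;> simp [hx]
  have h2 : |∫ x, Sᶜ.indicator ξ x * (η x - ∫ y, η y ∂μ) ∂μ| ≤
      c ^ (1 - q) * (2 * C) * N ^ q := by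
    rw [← hI, ← integral_const_mul, ← Real.norm_eq_abs]
    refine norm_integral_le_of_norm_le ((hξp.integrable_norm_rpow hp0 hpt).const_mul _)
      (Eventually.of_forall fun x => ?_)
    rw [norm_mul]
    have : ‖Sᶜ.indicator ξ x‖ ≤ c ^ (1 - q) * ‖ξ x‖ ^ q := by
      by_cases hx : x ∈ S
      · simp [hx]; positivity
      · have hx' : c < ‖ξ x‖ := not_le.1 hx
        have hx0 : 0 < ‖ξ x‖ := hc.trans hx'
        have e1 : ‖ξ x‖ = ‖ξ x‖ ^ (1 - q) * ‖ξ x‖ ^ q := by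
          rw [← Real.rpow_add hx0]; simp
        have e2 : ‖ξ x‖ ^ (1 - q) ≤ c ^ (1 - q) :=
          Real.rpow_le_rpow_of_nonpos hc hx'.le (by linarith)
        simp only [Set.indicator, Set.mem_compl_iff, hx, not_false_eq_true, if_true]
        calc _ = _ := e1
          _ ≤ _ := by gcongr
    calc _ ≤ (c ^ (1 - q) * ‖ξ x‖ ^ q) * (2 * C) := by
          gcongr; exact hwb x
      _ = _ := by ring
  have e3 : a * c = N * a ^ (1 - 1 / q) := by
    rw [hcdef, sub_eq_add_neg, Real.rpow_add ha0, Real.rpow_one]; ring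
  have e4 : c ^ (1 - q) * N ^ q = N * a ^ (1 - 1 / q) := by
    rw [hcdef, Real.mul_rpow hN0 (by positivity), ← Real.rpow_mul ha0.le]
    have : -(1 / q) * (1 - q) = 1 - 1 / q := by field_simp; ring
    rw [this, mul_right_comm, ← Real.rpow_add hNpos]
    simp
  rw [hsplit]
  calc _ ≤ _ := abs_add_le _ _
    _ ≤ 4 * a * c * C + c ^ (1 - q) * (2 * C) * N ^ q := add_le_add h1 h2
    _ = 4 * (a * c) * C + 2 * (c ^ (1 - q) * N ^ q) * C := by ring
    _ = _ := by rw [e3, e4]; ring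

lemma cov_Lp {E : Type*} {G H m0 : MeasurableSpace E} (hG : G ≤ m0) (hH : H ≤ m0)
    (μ : Measure E) [IsProbabilityMeasure μ] {ξ η : E → ℝ} {a C : ℝ} (hC : 0 ≤ C)
    (ha : ∀ A B, MeasurableSet[G] A → MeasurableSet[H] B →
      |μ.real (A ∩ B) - μ.real A * μ.real B| ≤ a)
    {p : ℝ≥0∞} (hp : 1 ≤ p)
    (hξ : StronglyMeasurable[G] ξ) (hξp : MemLp ξ p μ)
    (hη : StronglyMeasurable[H] η) (hηb : ∀ x, ‖η x‖ ≤ C) :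
    |∫ x, ξ x * (η x - ∫ y, η y ∂μ) ∂μ| ≤
      6 * a ^ (1 - (1 / p).toReal) * lpNorm ξ p μ * C := by
  have ha0 : 0 ≤ a := (abs_nonneg _).trans
    (ha ∅ ∅ (@MeasurableSet.empty _ G) (@MeasurableSet.empty _ H))
  have he : 0 ≤ 1 - (1 / p).toReal := by
    have : (1 / p).toReal ≤ 1 := by
      rw [← ENNReal.toReal_one]
      exact ENNReal.toReal_mono ENNReal.one_ne_top (by simpa using hp)
    linarith
  have hcont : Continuous fun t : ℝ => 6 * t ^ (1 - (1 / p).toReal) * lpNorm ξ p μ * C :=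
    (((Real.continuous_rpow_const he).const_mul 6).mul_const _).mul_const _
  have ht : Tendsto (fun t : ℝ => 6 * t ^ (1 - (1 / p).toReal) * lpNorm ξ p μ * C) (𝓝[>] a)
      (𝓝 (6 * a ^ (1 - (1 / p).toReal) * lpNorm ξ p μ * C)) :=
    (hcont.tendsto a).mono_left nhdsWithin_le_nhds
  refine ge_of_tendsto ht ?_
  filter_upwards [self_mem_nhdsWithin] with t (ht : a < t)
  exact cov_Lp_pos hG hH μ (ha0.trans_lt ht) hC
    (fun A B hA hB => (ha A B hA hB).trans ht.le) hp hξ hξp hη hηb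

lemma decorr_real {E : Type*} {G H m0 : MeasurableSpace E} (hG : G ≤ m0) (hH : H ≤ m0)
    (μ : Measure E) [IsProbabilityMeasure μ] {s η : E → ℝ} {a C g : ℝ} (hC : 0 ≤ C)
    (ha : ∀ A B, MeasurableSet[G] A → MeasurableSet[H] B →
      |μ.real (A ∩ B) - μ.real A * μ.real B| ≤ a)
    {p : ℝ≥0∞} (hp : 1 ≤ p) (hg0 : 0 ≤ g)
    (hs : MemLp s p μ) (hs1 : ∫ x, s x ∂μ = 1)
    (hg : ∫ x, |s x - (μ[s | G]) x| ∂μ ≤ g)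
    (hη : StronglyMeasurable[H] η) (hηb : ∀ x, ‖η x‖ ≤ C) :
    |∫ x, (s x - 1) * η x ∂μ| ≤
      (6 * a ^ (1 - (1 / p).toReal) + 2 * g) * (eLpNorm s p μ).toReal * C := by
  have ha0 : 0 ≤ a := (abs_nonneg _).trans
    (ha ∅ ∅ (@MeasurableSet.empty _ G) (@MeasurableSet.empty _ H))
  have hsi : Integrable s μ := hs.integrable hp
  have hti : Integrable (μ[s | G]) μ := integrable_condExp
  have hηi : Integrable η μ :=
    Integrable.of_bound (hη.mono hH).aestronglyMeasurable C (Eventually.of_forall hηb)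
  have hmul : ∀ u : E → ℝ, Integrable u μ → Integrable (fun x => u x * η x) μ := fun u hu =>
    hu.mul_bdd hηi.aestronglyMeasurable (Eventually.of_forall hηb)
  have hcov := cov_Lp hG hH μ hC ha hp stronglyMeasurable_condExp (hs.condExp hp) hη hηb
    (ξ := μ[s | G])
  have hle : lpNorm (μ[s | G]) p μ ≤ lpNorm s p μ := hs.lpNorm_condExp_le_lpNorm hp
  have h1 : (1 : ℝ) ≤ lpNorm s p μ := by
    rw [← toReal_eLpNorm hs.1]
    have h2 : eLpNorm s 1 μ ≤ eLpNorm s p μ := eLpNorm_le_eLpNorm_of_exponent_le hp hs.1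
    have h3 := ENNReal.toReal_mono hs.2.ne h2
    refine le_trans ?_ h3
    rw [toReal_eLpNorm hs.1, lpNorm_one_eq_integral_norm hs.1]
    calc (1 : ℝ) = ‖∫ x, s x ∂μ‖ := by rw [hs1]; simp
      _ ≤ _ := norm_integral_le_integral_norm _
  have hdi : Integrable (fun x => s x - (μ[s | G]) x) μ := hsi.sub hti
  have hsplit : ∫ x, (s x - 1) * η x ∂μ =
      ∫ x, (s x - (μ[s | G]) x) * η x ∂μ + ∫ x, (μ[s | G]) x * (η x - ∫ y, η y ∂μ) ∂μ := by
    rw [int_center μ hti (hmul _ hti), integral_condExp hG, hs1]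
    simp_rw [sub_mul]
    rw [integral_sub (hmul _ hsi) (by simpa using hηi), integral_sub (hmul _ hsi) (hmul _ hti)]
    simp
  have hfirst : |∫ x, (s x - (μ[s | G]) x) * η x ∂μ| ≤ g * C := by
    calc _ ≤ ∫ x, |s x - (μ[s | G]) x| * C ∂μ := by
          rw [← Real.norm_eq_abs]
          refine norm_integral_le_of_norm_le (hdi.abs.mul_const C)
            (Eventually.of_forall fun x => ?_)
          rw [norm_mul, Real.norm_eq_abs (s x - _)]
          gcongr
          exact hηb x
      _ ≤ g * C := by rw [integral_mul_const]; gcongr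
  rw [toReal_eLpNorm hs.1, hsplit]
  have hr : 0 ≤ a ^ (1 - (1 / p).toReal) := by positivity
  calc _ ≤ _ := abs_add_le _ _
    _ ≤ g * C + 6 * a ^ (1 - (1 / p).toReal) * lpNorm (μ[s | G]) p μ * C :=
      add_le_add hfirst hcov
    _ ≤ (2 * g * lpNorm s p μ) * C + 6 * a ^ (1 - (1 / p).toReal) * lpNorm s p μ * C := by
      gcongr
      nlinarith
    _ = _ := by ring

end AlphaMix

/-- Example 2 of the paper (non-stationary `α`-mixing processes): if `s ∈ L^p(μ)` has
`∫ s dμ = 1` and `‖s − E[s | X₀,...,Xₙ]‖_{L¹(μ)} ≤ γₙ`, then for every `n ≥ 1` and every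
bounded measurable function `f` of `(Xₙ, Xₙ₊₁, ...)`,
`|∫ s·f(X̄ₙ) dμ − ∫ f(X̄ₙ) dμ| ≤ (6 α_{[n/2]}^{1−1/p} + 2 γ_{[n/2]}) ‖s‖_{L^p} sup|f|`,
where `αₙ = sup_k α(𝓕_{0,k}, 𝓕_{k+n,∞})` are the strong mixing coefficients. -/
theorem alpha_mixing_decorrelation
    {E : Type*} [m0 : MeasurableSpace E] (μ : Measure E) [IsProbabilityMeasure μ]
    {𝒳 : ℕ → Type*} [∀ i, MeasurableSpace (𝒳 i)]
    (X : ∀ i, E → 𝒳 i) (hX : ∀ i, Measurable (X i))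
    (F0 : ℕ → MeasurableSpace E)
    (hF0 : ∀ k, F0 k = ⨆ i ∈ Finset.range (k + 1), MeasurableSpace.comap (X i) inferInstance)
    (Finf : ℕ → MeasurableSpace E)
    (hFinf : ∀ n, Finf n = ⨆ j : ℕ, MeasurableSpace.comap (X (n + j)) inferInstance)
    (alpha : MeasurableSpace E → MeasurableSpace E → ℝ)
    (halpha : ∀ G H, alpha G H =
      ⨆ A : {A : Set E // MeasurableSet[G] A}, ⨆ B : {B : Set E // MeasurableSet[H] B},
        |(μ ((A : Set E) ∩ (B : Set E))).toReal -
          (μ (A : Set E)).toReal * (μ (B : Set E)).toReal|)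
    (α : ℕ → ℝ) (hα : ∀ n, α n = ⨆ k : ℕ, alpha (F0 k) (Finf (k + n)))
    (p : ℝ≥0∞) (hp : 1 ≤ p)
    (γ : ℕ → ℝ) (hγ0 : ∀ n, 0 ≤ γ n)
    (s : E → ℝ) (hs : MemLp s p μ) (hs1 : ∫ x, s x ∂μ = 1)
    (hsγ : ∀ n, ∫ x, |s x - (μ[s | F0 n]) x| ∂μ ≤ γ n) :
    ∀ n : ℕ, 1 ≤ n → ∀ (f : (∀ j, 𝒳 (n + j)) → ℂ) (C : ℝ), Measurable f →
      (∀ y, ‖f y‖ ≤ C) →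
      ‖(∫ x, (s x : ℂ) * f (fun j => X (n + j) x) ∂μ) -
          ∫ x, f (fun j => X (n + j) x) ∂μ‖ ≤
        (6 * (α (n / 2)) ^ (1 - (1 / p).toReal) + 2 * γ (n / 2)) *
          (eLpNorm s p μ).toReal * C := by
  intro n hn f C hf hfC
  have hE : Nonempty E := by
    by_contra h
    rw [not_nonempty_iff] at h
    exact IsProbabilityMeasure.ne_zero μ (Measure.eq_zero_of_isEmpty μ)
  have hC : 0 ≤ C := (norm_nonneg _).trans (hfC fun j => X (n + j) hE.some)
  have hF0le : ∀ k, F0 k ≤ m0 := fun k => by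
    rw [hF0]; exact iSup₂_le fun i _ => (hX i).comap_le
  have hFle : ∀ k, Finf k ≤ m0 := fun k => by
    rw [hFinf]; exact iSup_le fun i => (hX _).comap_le
  have hd : ∀ A B : Set E, |μ.real (A ∩ B) - μ.real A * μ.real B| ≤ 1 := fun A B => by
    have h1 : μ.real (A ∩ B) ≤ 1 := measureReal_le_one
    have h2 : μ.real A ≤ 1 := measureReal_le_one
    have h3 : μ.real B ≤ 1 := measureReal_le_one
    have h4 : 0 ≤ μ.real (A ∩ B) := measureReal_nonneg
    have h5 : 0 ≤ μ.real A := measureReal_nonneg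
    have h6 : 0 ≤ μ.real B := measureReal_nonneg
    rw [abs_le]; constructor <;> nlinarith
  have hne : ∀ G : MeasurableSpace E, Nonempty {A : Set E // MeasurableSet[G] A} := fun G =>
    ⟨⟨∅, @MeasurableSet.empty _ G⟩⟩
  have halpha1 : ∀ G H, alpha G H ≤ 1 := fun G H => by
    rw [halpha]
    have := hne G
    have := hne H
    exact ciSup_le fun A => ciSup_le fun B => hd A B
  have halphale : ∀ (G H : MeasurableSpace E) (A B : Set E), MeasurableSet[G] A →
      MeasurableSet[H] B → |μ.real (A ∩ B) - μ.real A * μ.real B| ≤ alpha G H := by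
    intro G H A B hA hB
    have := hne H
    rw [halpha]
    refine le_ciSup_of_le ⟨1, ?_⟩ ⟨A, hA⟩ (le_ciSup_of_le ⟨1, ?_⟩ ⟨B, hB⟩ le_rfl)
    · rintro _ ⟨A, rfl⟩
      exact ciSup_le fun B => hd A B
    · rintro _ ⟨B, rfl⟩
      exact hd A B
  have hmix : ∀ A B, MeasurableSet[F0 (n / 2)] A → MeasurableSet[Finf (n / 2 + n / 2)] B →
      |μ.real (A ∩ B) - μ.real A * μ.real B| ≤ α (n / 2) := by
    intro A B hA hB
    refine (halphale _ _ A B hA hB).trans ?_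
    rw [hα]
    refine le_ciSup (f := fun k => alpha (F0 k) (Finf (k + n / 2))) ⟨1, ?_⟩ (n / 2)
    rintro _ ⟨k, rfl⟩
    exact halpha1 _ _
  set φ : E → ℂ := fun x => f (fun j => X (n + j) x) with hφ
  have hφm : Measurable[Finf (n / 2 + n / 2)] φ := by
    refine hf.comp ((@measurable_pi_iff E _ _ (Finf (n / 2 + n / 2)) _ _).2 fun j => ?_)
    rw [measurable_iff_comap_le, hFinf]
    have hj : n + j = n / 2 + n / 2 + (n - (n / 2 + n / 2) + j) := by omega
    rw [hj]
    exact le_iSup (fun i => MeasurableSpace.comap (X (n / 2 + n / 2 + i)) inferInstance) _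
  have hφi : Integrable φ μ := Integrable.of_bound
    (hφm.mono (hFle _) le_rfl).aestronglyMeasurable C (Eventually.of_forall fun x => hfC _)
  have hsi : Integrable s μ := hs.integrable hp
  have hsφ : Integrable (fun x => (s x : ℂ) * φ x) μ :=
    hsi.ofReal.mul_bdd hφi.aestronglyMeasurable (Eventually.of_forall fun x => hfC _)
  rw [← integral_sub hsφ hφi]
  set Z : ℂ := ∫ x, ((s x : ℂ) * φ x - φ x) ∂μ with hZ
  obtain ⟨u, hu, huZ⟩ : ∃ u : ℂ, ‖u‖ = 1 ∧ (u * Z).re = ‖Z‖ := by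
    by_cases h : Z = 0
    · exact ⟨1, by simp, by simp [h]⟩
    · have h' : ‖Z‖ ≠ 0 := norm_ne_zero_iff.2 h
      refine ⟨(starRingEnd ℂ) Z / ‖Z‖, by simp [h'], ?_⟩
      rw [div_mul_eq_mul_div, mul_comm, Complex.mul_conj, Complex.normSq_eq_norm_sq]
      norm_cast
      field_simp
  have hre : ‖Z‖ = ∫ x, (s x - 1) * (u * φ x).re ∂μ := by
    rw [← huZ, hZ, ← integral_const_mul]
    have := integral_re ((hsφ.sub hφi).const_mul u)
    refine Eq.trans this.symm (integral_congr_ae (Eventually.of_forall fun x => ?_))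
    simp
    ring
  have hmain := AlphaMix.decorr_real (hF0le (n / 2)) (hFle (n / 2 + n / 2)) μ hC hmix hp
    (hγ0 (n / 2)) hs hs1 (hsγ (n / 2)) (η := fun x => (u * φ x).re)
    (Measurable.stronglyMeasurable (Complex.measurable_re.comp
      ((measurable_const_mul u).comp hφm)))
    (fun x => by
      refine (Complex.abs_re_le_norm _).trans ?_
      rw [norm_mul, hu, one_mul]
      exact hfC _)
  rw [hre]
  exact (le_abs_self _).trans hmain
end
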